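/- Let A be a piecewise-Koszul algebra with period p ≥ 2 and jump degree d ≥ p, and let M be a piecewise-Koszul A-module generated in degree 0. Then for every integer k ≥ 1: (1) 𝓔_k(M) = ⊕_{n≥0} Ext^{pkn}_A(M,A_0), graded with n-th component Ext^{pkn}_A(M,A_0), is a Koszul module over 𝓔_k(A); and (2) 𝓔_k(A) = ⊕_{n≥0} Ext^{pkn}_A(A_0,A_0), graded with n-th component Ext^{pkn}_A(A_0,A_0) and the Yoneda product, is a Koszul algebra. -/

import Mathlib

noncomputable section

/-- The jump function `δ^d_p(n) = ((n − (n mod p))/p)·d + (n mod p)`. -/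
def jump (d p n : ℕ) : ℕ := (n - n % p) / p * d + n % p

/-- A positively graded `F`-algebra `A = ⊕_{i≥0} A_i`. -/
structure GradedAlg (F : Type) [Field F] where
  A : Type
  [ringA : Ring A]
  [algA : Algebra F A]
  grading : ℕ → Submodule F A
  [graded : GradedAlgebra grading]

attribute [instance] GradedAlg.ringA GradedAlg.algA GradedAlg.graded

namespace GradedAlg

variable {F : Type} [Field F] (𝒜 : GradedAlg F)

/-- The graded Jacobson radical `J = ⊕_{i≥1} A_i`, i.e. the irrelevant ideal. -/
def jideal : Ideal 𝒜.A := (HomogeneousIdeal.irrelevant 𝒜.grading).toIdeal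

/-- The standing assumptions: `A_0` is a semisimple Artin algebra, `A` is generated in
degrees 0 and 1 (`A_i · A_j = A_{i+j}`), and `A_1` is finite dimensional over `F`. -/
structure Standing : Prop where
  semisimple : IsSemisimpleRing ↥(𝒜.grading 0)
  artinian : IsArtinianRing ↥(𝒜.grading 0)
  gen01 : ∀ i j : ℕ, 𝒜.grading i * 𝒜.grading j = 𝒜.grading (i + j)
  findim : FiniteDimensional F ↥(𝒜.grading 1)

/-- A (ℤ-)graded module over the graded algebra `𝒜`. -/
structure GMod where
  M : Type
  [acg : AddCommGroup M]
  [modF : Module F M]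
  [modA : Module 𝒜.A M]
  [tower : IsScalarTower F 𝒜.A M]
  [scomm : SMulCommClass 𝒜.A F M]
  grading : ℤ → Submodule F M
  sup_eq_top : (⨆ j : ℤ, grading j) = ⊤
  indep : iSupIndep grading
  smul_mem : ∀ {i : ℕ} {j : ℤ} {a : 𝒜.A} {m : M},
    a ∈ 𝒜.grading i → m ∈ grading j → a • m ∈ grading ((i : ℤ) + j)

attribute [instance] GMod.acg GMod.modF GMod.modA GMod.tower GMod.scomm

variable {𝒜}

/-- A degree-zero morphism of graded modules. -/
structure GHom (M N : 𝒜.GMod) where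
  lin : M.M →ₗ[𝒜.A] N.M
  grad : ∀ (j : ℤ) (x : M.M), x ∈ M.grading j → lin x ∈ N.grading j

/-- A graded module is generated in degree `s` if `A · M_s = M`. -/
def GMod.GenInDeg (M : 𝒜.GMod) (s : ℤ) : Prop :=
  Submodule.span 𝒜.A (M.grading s : Set M.M) = ⊤

/-- `T` is the trivial graded module `A_0 = A/J`, concentrated in degree `0`. -/
def IsTrivialGMod (T : 𝒜.GMod) : Prop :=
  (∀ j : ℤ, j ≠ 0 → T.grading j = ⊥) ∧
    Nonempty (T.M ≃ₗ[𝒜.A] (𝒜.A ⧸ 𝒜.jideal))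

/-- A minimal graded projective resolution
`⋯ → P_{n+1} → P_n → ⋯ → P_0 → M → 0` of the graded module `M`,
with finitely generated terms. -/
structure MinRes (M : 𝒜.GMod) where
  P : ℕ → 𝒜.GMod
  d : ∀ n : ℕ, GHom (P (n + 1)) (P n)
  aug : GHom (P 0) M
  fg : ∀ n, Module.Finite 𝒜.A (P n).M
  projective : ∀ n, Module.Projective 𝒜.A (P n).M
  aug_surj : Function.Surjective aug.lin
  exact_aug : LinearMap.range (d 0).lin = LinearMap.ker aug.lin
  exact : ∀ n, LinearMap.range (d (n + 1)).lin = LinearMap.ker (d n).lin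
  minimal : ∀ n, LinearMap.range (d n).lin ≤ 𝒜.jideal • (⊤ : Submodule 𝒜.A (P n).M)

variable (𝒜)

/-- `M` is a piecewise-Koszul module (period `p`, jump degree `d`, shift `s`):
it has a minimal graded projective resolution with `P_n` generated in degree `δ^d_p(n) + s`. -/
def IsPKMod (p d : ℕ) (s : ℤ) (M : 𝒜.GMod) : Prop :=
  ∃ R : MinRes M, ∀ n : ℕ, (R.P n).GenInDeg ((jump d p n : ℤ) + s)

/-- `A` is a piecewise-Koszul algebra (period `p`, jump degree `d`): the trivial module `T`
admits a minimal graded projective resolution with `P_n` generated in degree `δ^d_p(n)`. -/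
def IsPKAlg (p d : ℕ) (T : 𝒜.GMod) : Prop := IsPKMod 𝒜 p d 0 T

/-- A Koszul module: a minimal graded projective resolution with `P_n` generated in degree `n`. -/
def IsKoszulMod (M : 𝒜.GMod) : Prop :=
  ∃ R : MinRes M, ∀ n : ℕ, (R.P n).GenInDeg (n : ℤ)

variable {𝒜}

section Ext

variable (T : 𝒜.GMod) {M : 𝒜.GMod}

/-- The space of `A`-linear maps `P_n → T` (cochains). -/
abbrev HomSp (R : MinRes M) (n : ℕ) := (R.P n).M →ₗ[𝒜.A] T.M

/-- Precomposition, as an `F`-linear map on cochains. -/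
def precompF {M₁ M₂ : 𝒜.GMod} (g : M₁.M →ₗ[𝒜.A] M₂.M) :
    (M₂.M →ₗ[𝒜.A] T.M) →ₗ[F] (M₁.M →ₗ[𝒜.A] T.M) where
  toFun f := f ∘ₗ g
  map_add' f₁ f₂ := by ext x; simp
  map_smul' c f := by ext x; simp

/-- Cocycles: maps `P_n → T` vanishing on the image of `P_{n+1}`. -/
def cocyc (R : MinRes M) (n : ℕ) : Submodule F (HomSp T R n) :=
  LinearMap.ker (precompF T (R.d n).lin)

/-- Coboundaries: maps `P_n → T` factoring through `d_{n-1}`. -/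
def cobound (R : MinRes M) : (n : ℕ) → Submodule F (HomSp T R n)
  | 0 => ⊥
  | n + 1 => LinearMap.range (precompF T (R.d n).lin)

/-- The coboundaries, viewed inside the cocycles. -/
def extRel (R : MinRes M) (n : ℕ) : Submodule F ↥(cocyc T R n) :=
  (cobound T R n).comap (cocyc T R n).subtype

/-- `Ext^n_A(M, T)`, computed from the resolution `R` of `M`. -/
abbrev ExtQ (R : MinRes M) (n : ℕ) := ↥(cocyc T R n) ⧸ extRel T R n

/-- The class in `Ext^n_A(M,T)` of a cocycle. -/
def extCls {R : MinRes M} {n : ℕ} {f : HomSp T R n} (hf : f ∈ cocyc T R n) :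
    ExtQ T R n :=
  Submodule.Quotient.mk ⟨f, hf⟩

/-- Cochains of shift-degree `j`: maps `P_n → T` vanishing on every `(P_n)_i` with `i ≠ j`. -/
def homDeg (R : MinRes M) (n : ℕ) (j : ℤ) : Submodule F (HomSp T R n) where
  carrier := {f | ∀ i : ℤ, i ≠ j → ∀ x ∈ (R.P n).grading i, f x = 0}
  add_mem' := fun hf hg i hi x hx => by
    simp only [LinearMap.add_apply, hf i hi x hx, hg i hi x hx, add_zero]
  zero_mem' := fun i hi x hx => rfl
  smul_mem' := fun c f hf i hi x hx => by
    simp only [LinearMap.smul_apply, hf i hi x hx, smul_zero]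

/-- The shift-degree `j` component `Ext^n_A(M,T)_j`. -/
def extComp (R : MinRes M) (n : ℕ) (j : ℤ) : Submodule F (ExtQ T R n) :=
  Submodule.map (extRel T R n).mkQ ((homDeg T R n j).comap (cocyc T R n).subtype)

/-- Transport `Ext` along an equality of cohomological degrees. -/
def extCast (R : MinRes M) {a b : ℕ} (h : a = b) : ExtQ T R a ≃ₗ[F] ExtQ T R b :=
  h ▸ LinearEquiv.refl F (ExtQ T R a)

/-- A chain map lifting of a cochain `g : P_j → T` over the resolutions `RM` of `M`
and `RT` of `T`. -/
structure ChainLift (RT : MinRes T) (RM : MinRes M) (j : ℕ)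
    (g : (RM.P j).M →ₗ[𝒜.A] T.M) where
  ℓ : ∀ m k : ℕ, m = k + j → ((RM.P m).M →ₗ[𝒜.A] (RT.P k).M)
  comm_aug : RT.aug.lin ∘ₗ ℓ j 0 (by omega) = g
  comm : ∀ k : ℕ, (RT.d k).lin ∘ₗ ℓ (k + j + 1) (k + 1) (by omega) =
    ℓ (k + j) k rfl ∘ₗ (RM.d (k + j)).lin

/-- `μ` is the (bigraded family of) Yoneda product(s)
`Ext^i(T,T) ⊗ Ext^j(M,T) → Ext^{i+j}(M,T)`: it is computed by composing a cocycle
`f : P_i → T` with a chain lifting of a cocycle `g : Q_j → T`. -/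
def IsYonedaMul (RT : MinRes T) (RM : MinRes M)
    (μ : ∀ i j : ℕ, ExtQ T RT i →ₗ[F] ExtQ T RM j →ₗ[F] ExtQ T RM (i + j)) : Prop :=
  ∀ (i j : ℕ) (f : HomSp T RT i) (hf : f ∈ cocyc T RT i)
    (g : HomSp T RM j) (hg : g ∈ cocyc T RM j)
    (L : ChainLift T RT RM j g)
    (hc : f ∘ₗ L.ℓ (i + j) i (by omega) ∈ cocyc T RM (i + j)),
    μ i j (extCls T hf) (extCls T hg) = extCls T hc

/-- `E(A) = Ext^*_A(A_0,A_0)` is generated in the ext-degrees belonging to `S`. -/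
def ExtGenIn (RT : MinRes T)
    (μ : ∀ i j : ℕ, ExtQ T RT i →ₗ[F] ExtQ T RT j →ₗ[F] ExtQ T RT (i + j))
    (S : Set ℕ) : Prop :=
  ∀ W : (n : ℕ) → Submodule F (ExtQ T RT n),
    (∀ n ∈ S, W n = ⊤) →
    (∀ (i j : ℕ) (x : ExtQ T RT i) (y : ExtQ T RT j),
      x ∈ W i → y ∈ W j → μ i j x y ∈ W (i + j)) →
    ∀ n, W n = ⊤

/-- `E(M) = Ext^*_A(M,A_0)` is generated in degree `0` as a graded `E(A)`-module. -/
def ExtModGenInZero (RT : MinRes T) (RM : MinRes M)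
    (μ : ∀ i j : ℕ, ExtQ T RT i →ₗ[F] ExtQ T RM j →ₗ[F] ExtQ T RM (i + j)) : Prop :=
  ∀ W : (n : ℕ) → Submodule F (ExtQ T RM n),
    W 0 = ⊤ →
    (∀ (i j : ℕ) (x : ExtQ T RT i) (y : ExtQ T RM j),
      y ∈ W j → μ i j x y ∈ W (i + j)) →
    ∀ n, W n = ⊤

end Ext

/-- `JM` is (a graded module isomorphic to) the submodule `J·M` of `M`. -/
def IsJM (M JM : 𝒜.GMod) : Prop :=
  ∃ e : JM.M ≃ₗ[𝒜.A] ↥(𝒜.jideal • (⊤ : Submodule 𝒜.A M.M)),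
    ∀ (j : ℤ) (x : JM.M), x ∈ JM.grading j ↔ ((e x : M.M) ∈ M.grading j)

/-- `Q` is (a graded module isomorphic to) the quotient `M/JM`. -/
def IsQuotJM (M Q : 𝒜.GMod) : Prop :=
  ∃ e : Q.M ≃ₗ[𝒜.A] (M.M ⧸ (𝒜.jideal • (⊤ : Submodule 𝒜.A M.M))),
    ∀ j : ℤ, Q.grading j = Submodule.map
      ((e.symm.toLinearMap ∘ₗ (𝒜.jideal • (⊤ : Submodule 𝒜.A M.M)).mkQ).restrictScalars F)
      (M.grading j)

/-- `W` is (isomorphic to) the `n`-th syzygy `Ω^n(M)` of `M` in the minimal graded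
projective resolution `R`. -/
def IsSyzygy {M : 𝒜.GMod} (R : MinRes M) : ℕ → 𝒜.GMod → Prop
  | 0, W => ∃ e : W.M ≃ₗ[𝒜.A] M.M,
      ∀ (j : ℤ) (x : W.M), x ∈ W.grading j ↔ e x ∈ M.grading j
  | 1, W => ∃ e : W.M ≃ₗ[𝒜.A] ↥(LinearMap.ker R.aug.lin),
      ∀ (j : ℤ) (x : W.M), x ∈ W.grading j ↔ ((e x : (R.P 0).M) ∈ (R.P 0).grading j)
  | (n + 2), W => ∃ e : W.M ≃ₗ[𝒜.A] ↥(LinearMap.ker (R.d n).lin),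
      ∀ (j : ℤ) (x : W.M), x ∈ W.grading j ↔ ((e x : (R.P (n + 1)).M) ∈ (R.P (n + 1)).grading j)

end GradedAlg

/-!
Put `c = p * k`. Write a minimal resolution with terms generated in the degrees `δ n` as its total
complex `X`, a differential module. As `δ` is strictly increasing and adding `c` to its argument
adds a constant to its values, chain maps lowering the homological degree by a multiple of `c` are
determined by what they do to the degree `0` generators of the target, and everything prescribed
there lifts. Minimality kills all differentials on cochains, so `Ext^{cn}` is exactly the space of
chain maps of degree `cn`, and the Yoneda product is composition; thus `𝓔_k(A)` is an algebra of
chain endomorphisms of the complex `X` of `A₀`, and `𝓔_k(M)` is the module of chain maps into `X`.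

Given a complex `Y` exact in positive degrees, cover its head by a direct summand `P` of a finite
power of `X` and lift the inclusion to a chain map. Chain maps from `Y` to `X` are then a quotient
of the projective module of chain maps from `P` to `X`, and the kernel is the module attached to
another such complex, shifted by one. Iterating gives a linear resolution. The trivial
`𝓔_k(A)`-module is the case where `Y` is `A` itself, concentrated in homological degree `0`.
-/

namespace GradedAlg

variable {F : Type} [Field F] {𝒜 : GradedAlg F}

/-! ### Differential modules and lifting of chain maps -/

/-- The subring `A_0` of `A`. As a subring it acts on every `A`-module by restriction, so no
separate module structure has to be carried around. -/
abbrev ZeroRing (𝒜 : GradedAlg F) : Type := SetLike.GradeZero.subring 𝒜.grading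

/-- The degree `j` part `A_{j-s} · V` of the graded submodule generated by an `A_0`-submodule `V`
placed in degree `s`. -/
def gradedSpan {Y : Type*} [AddCommGroup Y] [Module 𝒜.A Y] (V : Submodule (ZeroRing 𝒜) Y)
    (s j : ℕ) : Submodule (ZeroRing 𝒜) Y :=
  Submodule.span (ZeroRing 𝒜) {x | ∃ i, s + i = j ∧ ∃ a ∈ 𝒜.grading i, ∃ v ∈ V, a • v = x}

section gradedSpan

variable {Y Z : Type*} [AddCommGroup Y] [Module 𝒜.A Y] [AddCommGroup Z] [Module 𝒜.A Z]
  {V : Submodule (ZeroRing 𝒜) Y} {W : Submodule (ZeroRing 𝒜) Z} {s s' i j j' : ℕ}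

theorem smul_mem_gradedSpan (h : s + i = j) {a : 𝒜.A} (ha : a ∈ 𝒜.grading i) {v : Y}
    (hv : v ∈ V) : a • v ∈ gradedSpan V s j :=
  Submodule.subset_span ⟨i, h, a, ha, v, hv, rfl⟩

theorem gradedSpan_eq_bot_of_lt (h : j < s) : gradedSpan V s j = ⊥ := by
  refine Submodule.span_eq_bot.2 ?_
  rintro x ⟨i, hi, -⟩
  omega

theorem gradedSpan_self : gradedSpan V s s = V := by
  refine le_antisymm (Submodule.span_le.2 ?_) fun v hv => ?_
  · rintro x ⟨i, hi, a, ha, v, hv, rfl⟩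
    obtain rfl : i = 0 := by omega
    exact V.smul_mem (⟨a, ha⟩ : ZeroRing 𝒜) hv
  · simpa using smul_mem_gradedSpan (add_zero s) (SetLike.GradedOne.one_mem (A := 𝒜.grading)) hv

theorem smul_mem_gradedSpan_add {a : 𝒜.A} (ha : a ∈ 𝒜.grading i) {x : Y}
    (hx : x ∈ gradedSpan V s j) : a • x ∈ gradedSpan V s (i + j) := by
  induction hx using Submodule.span_induction generalizing a with
  | mem x hx =>
    obtain ⟨l, hl, b, hb, v, hv, rfl⟩ := hx
    rw [← mul_smul]
    exact smul_mem_gradedSpan (by omega) (SetLike.mul_mem_graded ha hb) hv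
  | zero => simp
  | add x y _ _ hx hy => rw [smul_add]; exact add_mem (hx ha) (hy ha)
  | smul r x _ hx =>
    rw [Subring.smul_def, ← mul_smul]
    have har : a * (r : 𝒜.A) ∈ 𝒜.grading (i + 0) := SetLike.mul_mem_graded ha r.2
    exact hx har

theorem map_mem_gradedSpan {e : ℕ} (f : Y →ₗ[𝒜.A] Z) (hf : ∀ v ∈ V, f v ∈ gradedSpan W s' e)
    (h : s + j' = e + j) {x : Y} (hx : x ∈ gradedSpan V s j) : f x ∈ gradedSpan W s' j' := by
  induction hx using Submodule.span_induction with
  | mem x hx =>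
    obtain ⟨l, hl, b, hb, v, hv, rfl⟩ := hx
    obtain rfl : j' = l + e := by omega
    rw [map_smul]
    exact smul_mem_gradedSpan_add hb (hf v hv)
  | zero => simp
  | add x y _ _ hx hy => rw [map_add]; exact add_mem hx hy
  | smul r x _ hx => rw [Subring.smul_def, map_smul]; exact Submodule.smul_mem _ r hx

theorem map_mem_gradedSpan_of_mapsTo (f : Y →ₗ[𝒜.A] Z) (hf : ∀ v ∈ V, f v ∈ W)
    (h : s + j' = s' + j) {x : Y} (hx : x ∈ gradedSpan V s j) : f x ∈ gradedSpan W s' j' :=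
  map_mem_gradedSpan f (fun v hv => by rw [gradedSpan_self]; exact hf v hv) h hx

theorem eqOn_gradedSpan {f g : Y →ₗ[𝒜.A] Z} (h : ∀ v ∈ V, f v = g v) {x : Y}
    (hx : x ∈ gradedSpan V s j) : f x = g x := by
  induction hx using Submodule.span_induction with
  | mem x hx =>
    obtain ⟨-, -, b, -, v, hv, rfl⟩ := hx
    rw [map_smul, map_smul, h v hv]
  | zero => simp
  | add x y _ _ hx hy => rw [map_add, map_add, hx, hy]
  | smul r x _ hx => rw [Subring.smul_def, map_smul, map_smul, hx]

theorem map_eq_zero_of_mem_gradedSpan {f : Y →ₗ[𝒜.A] Z} (h : ∀ v ∈ V, f v = 0) {x : Y}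
    (hx : x ∈ gradedSpan V s j) : f x = 0 :=
  eqOn_gradedSpan (g := 0) h hx

theorem exists_gradedSpan_map_eq {f : Y →ₗ[𝒜.A] Z} (h : ∀ w ∈ W, ∃ v ∈ V, f v = w) {z : Z}
    (hz : z ∈ gradedSpan W s j) : ∃ y ∈ gradedSpan V s j, f y = z := by
  induction hz using Submodule.span_induction with
  | mem x hx =>
    obtain ⟨l, hl, b, hb, w, hw, rfl⟩ := hx
    obtain ⟨v, hv, rfl⟩ := h w hw
    exact ⟨b • v, smul_mem_gradedSpan hl hb hv, map_smul f b v⟩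
  | zero => exact ⟨0, zero_mem _, map_zero f⟩
  | add x y _ _ hx hy =>
    obtain ⟨x', hx', rfl⟩ := hx
    obtain ⟨y', hy', rfl⟩ := hy
    exact ⟨x' + y', add_mem hx' hy', map_add f x' y'⟩
  | smul r x _ hx =>
    obtain ⟨x', hx', rfl⟩ := hx
    exact ⟨r • x', Submodule.smul_mem _ r hx', map_smul f (r : 𝒜.A) x'⟩

end gradedSpan

/-- A minimal complex of graded projectives whose `n`-th term is generated in degree `δ n`, encoded
by its total module: `gen n` is the space of generators of the `n`-th term, and projectivity is the
property that `A_0`-linear maps on the generators extend to `A`-linear maps. Keeping all the terms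
in one module makes every chain map, whatever its homological degree, an `A`-linear map. -/
structure PureComplex (𝒜 : GradedAlg F) (δ : ℕ → ℕ) where
  carrier : Type
  [addCommGroup : AddCommGroup carrier]
  [module : Module 𝒜.A carrier]
  gen : ℕ → Submodule (ZeroRing 𝒜) carrier
  gen_fg : ∀ n, (gen n).FG
  span_gen : Submodule.span 𝒜.A (⋃ n, (gen n : Set carrier)) = ⊤
  exists_extend : ∀ (Z : Type) [AddCommGroup Z] [Module 𝒜.A Z]
    (u : ∀ n, gen n →ₗ[ZeroRing 𝒜] Z), ∃ f : carrier →ₗ[𝒜.A] Z, ∀ n (v : gen n), f v = u n v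
  diff : carrier →ₗ[𝒜.A] carrier
  diff_gen_zero : ∀ v ∈ gen 0, diff v = 0
  diff_gen_succ : ∀ n, ∀ v ∈ gen (n + 1), diff v ∈ gradedSpan (gen n) (δ n) (δ (n + 1))
  diff_diff : ∀ x, diff (diff x) = 0

attribute [instance] PureComplex.addCommGroup PureComplex.module

/-- `δ` is a strictly increasing degree function for which `s` is a period. Taking `n = 0` in
`map_add` forces `δ 0 = 0`. -/
structure IsJumpPeriod (δ : ℕ → ℕ) (s : ℕ) : Prop where
  strictMono : StrictMono δ
  map_add : ∀ n, δ (n + s) = δ n + δ s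

namespace IsJumpPeriod

variable {δ : ℕ → ℕ} {s : ℕ}

theorem map_zero (h : IsJumpPeriod δ s) : δ 0 = 0 := by
  have := h.map_add 0
  rw [zero_add] at this
  omega

theorem zero (h : IsJumpPeriod δ s) : IsJumpPeriod δ 0 :=
  ⟨h.strictMono, fun n => by rw [h.map_zero]; rfl⟩

theorem mul (h : IsJumpPeriod δ s) (t : ℕ) : IsJumpPeriod δ (s * t) := by
  refine ⟨h.strictMono, ?_⟩
  induction t with
  | zero => exact h.zero.map_add
  | succ t ih => intro n; rw [Nat.mul_succ, ← add_assoc, h.map_add, h.map_add, ih, add_assoc]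

end IsJumpPeriod

namespace PureComplex

variable {δ : ℕ → ℕ}

instance : CoeSort (PureComplex 𝒜 δ) Type := ⟨carrier⟩

variable {X Y W : PureComplex 𝒜 δ} {s t n j : ℕ}

/-- The degree `j` part of the `n`-th term. -/
def piece (Y : PureComplex 𝒜 δ) (n j : ℕ) : Submodule (ZeroRing 𝒜) Y :=
  gradedSpan (Y.gen n) (δ n) j

theorem piece_self : Y.piece n (δ n) = Y.gen n := gradedSpan_self

theorem hom_ext {Z : Type*} [AddCommGroup Z] [Module 𝒜.A Z] {f g : Y →ₗ[𝒜.A] Z}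
    (h : ∀ n, ∀ v ∈ Y.gen n, f v = g v) : f = g := by
  refine LinearMap.ext_on Y.span_gen fun v hv => ?_
  obtain ⟨n, hn⟩ := Set.mem_iUnion.1 hv
  exact h n v hn

theorem exists_extend_single (Y : PureComplex 𝒜 δ) {Z : Type} [AddCommGroup Z] [Module 𝒜.A Z]
    (n : ℕ) (u : Y.gen n →ₗ[ZeroRing 𝒜] Z) : ∃ f : Y →ₗ[𝒜.A] Z, ∀ v : Y.gen n, f v = u v := by
  obtain ⟨f, hf⟩ := Y.exists_extend Z (Function.update (fun _ => 0) n u)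
  exact ⟨f, fun v => by rw [hf, Function.update_self]⟩

theorem diff_mem_piece {x : Y} (hx : x ∈ Y.piece (n + 1) j) : Y.diff x ∈ Y.piece n j :=
  map_mem_gradedSpan Y.diff (Y.diff_gen_succ n) rfl hx

/-- Exactness at the terms of index at least `s`. The term of index `0` is exempt in degree `δ 0`,
so `ExactFrom 0` says that the complex resolves a module concentrated in that degree. -/
def ExactFrom (Y : PureComplex 𝒜 δ) (s : ℕ) : Prop :=
  ∀ n, s ≤ n → ∀ j, (n = 0 → δ 0 < j) →
    ∀ x ∈ Y.piece n j, Y.diff x = 0 → ∃ y ∈ Y.piece (n + 1) j, Y.diff y = x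

theorem ExactFrom.mono (h : Y.ExactFrom s) (hst : s ≤ t) : Y.ExactFrom t :=
  fun n hn => h n (hst.trans hn)

theorem ExactFrom.eq_zero_of_diff_eq_zero (hδ : StrictMono δ) (h : Y.ExactFrom s)
    (hn : s ≤ n + 1) {v : Y} (hv : v ∈ Y.gen (n + 1)) (hd : Y.diff v = 0) : v = 0 := by
  obtain ⟨y, hy, rfl⟩ := h (n + 1) hn (δ (n + 1)) (fun h => absurd h n.succ_ne_zero) v
    (piece_self.ge hv) hd
  rw [piece, gradedSpan_eq_bot_of_lt (hδ n.succ.lt_succ_self)] at hy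
  rw [(Submodule.mem_bot _).1 hy, map_zero]

/-- The chain maps `Y → X` that lower the homological degree by `s`. They also lower the internal
degree by `δ s`, whenever `s` is a period of `δ`. -/
structure IsChainMap (s : ℕ) (Y X : PureComplex 𝒜 δ) (f : Y →ₗ[𝒜.A] X) : Prop where
  eq_zero_of_lt : ∀ n < s, ∀ v ∈ Y.gen n, f v = 0
  map_mem_gen : ∀ n, ∀ v ∈ Y.gen (n + s), f v ∈ X.gen n
  map_diff : ∀ y, f (Y.diff y) = X.diff (f y)

namespace IsChainMap

variable {f f' : Y →ₗ[𝒜.A] X}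

theorem of_shift_zero (hmem : ∀ n, ∀ v ∈ Y.gen n, f v ∈ X.gen n)
    (hdiff : ∀ y, f (Y.diff y) = X.diff (f y)) : IsChainMap 0 Y X f where
  eq_zero_of_lt _ hn := absurd hn (Nat.not_lt_zero _)
  map_mem_gen := hmem
  map_diff := hdiff

theorem comp {g : X →ₗ[𝒜.A] W} (hg : IsChainMap s X W g) (hf : IsChainMap t Y X f) :
    IsChainMap (s + t) Y W (g ∘ₗ f) where
  eq_zero_of_lt l hl v hv := by
    rw [LinearMap.comp_apply]
    rcases lt_or_ge l t with h | h
    · rw [hf.eq_zero_of_lt l h v hv, map_zero]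
    · obtain ⟨q, rfl⟩ := Nat.exists_eq_add_of_le' h
      exact hg.eq_zero_of_lt q (by omega) _ (hf.map_mem_gen q v hv)
  map_mem_gen l v hv := hg.map_mem_gen l _ (hf.map_mem_gen _ v (by rwa [add_assoc]))
  map_diff y := by simp only [LinearMap.comp_apply, hf.map_diff, hg.map_diff]

theorem add (hf : IsChainMap s Y X f) (hf' : IsChainMap s Y X f') :
    IsChainMap s Y X (f + f') where
  eq_zero_of_lt l hl v hv := by
    rw [LinearMap.add_apply, hf.eq_zero_of_lt l hl v hv, hf'.eq_zero_of_lt l hl v hv, add_zero]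
  map_mem_gen l v hv := add_mem (hf.map_mem_gen l v hv) (hf'.map_mem_gen l v hv)
  map_diff y := by simp only [LinearMap.add_apply, hf.map_diff, hf'.map_diff, map_add]

theorem neg (hf : IsChainMap s Y X f) : IsChainMap s Y X (-f) where
  eq_zero_of_lt l hl v hv := by rw [LinearMap.neg_apply, hf.eq_zero_of_lt l hl v hv, neg_zero]
  map_mem_gen l v hv := neg_mem (hf.map_mem_gen l v hv)
  map_diff y := by simp only [LinearMap.neg_apply, hf.map_diff, map_neg]

theorem zero : IsChainMap s Y X 0 where
  eq_zero_of_lt _ _ _ _ := rfl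
  map_mem_gen _ _ _ := zero_mem _
  map_diff _ := (map_zero _).symm

theorem id : IsChainMap 0 Y Y LinearMap.id := of_shift_zero (fun _ _ hv => hv) fun _ => rfl

theorem map_mem_piece (hs : IsJumpPeriod δ s) (hf : IsChainMap s Y X f) {y : Y}
    (hy : y ∈ Y.piece (n + s) (j + δ s)) : f y ∈ X.piece n j :=
  map_mem_gradedSpan_of_mapsTo f (hf.map_mem_gen n) (by rw [hs.map_add]; ring) hy

theorem map_mem_piece_zero (hf : IsChainMap 0 Y X f) {y : Y} (hy : y ∈ Y.piece n j) :
    f y ∈ X.piece n j :=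
  map_mem_gradedSpan_of_mapsTo f (hf.map_mem_gen n) rfl hy

theorem eq_zero_of_head_eq_zero (hδ : StrictMono δ) (hX : X.ExactFrom 0) (hf : IsChainMap s Y X f)
    (h0 : ∀ v ∈ Y.gen s, f v = 0) : f = 0 := by
  have key : ∀ n, ∀ v ∈ Y.gen (n + s), f v = 0 := by
    intro n
    induction n with
    | zero => simpa using h0
    | succ n ih =>
      intro v hv
      refine hX.eq_zero_of_diff_eq_zero hδ (Nat.zero_le _) (hf.map_mem_gen _ v hv) ?_
      rw [← hf.map_diff]
      rw [Nat.add_right_comm] at hv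
      exact map_eq_zero_of_mem_gradedSpan ih (Y.diff_gen_succ _ v hv)
  refine hom_ext fun m v hv => ?_
  rcases lt_or_ge m s with h | h
  · exact hf.eq_zero_of_lt m h v hv
  · obtain ⟨n, rfl⟩ := Nat.exists_eq_add_of_le' h
    exact key n v hv

theorem eq_of_head_eq (hδ : StrictMono δ) (hX : X.ExactFrom 0) (hf : IsChainMap s Y X f)
    (hf' : IsChainMap s Y X f') (h : ∀ v ∈ Y.gen s, f v = f' v) : f = f' := by
  rw [← sub_eq_zero, sub_eq_add_neg]
  refine (hf.add hf'.neg).eq_zero_of_head_eq_zero hδ hX fun v hv => ?_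
  rw [LinearMap.add_apply, LinearMap.neg_apply, h v hv, add_neg_cancel]

end IsChainMap

/-- One stage of the inductive construction of a chain map: `f` is prescribed on `gen (n + s)`, in
such a way that it can be extended to `gen (n + 1 + s)`. -/
structure IsChainMapAt (s : ℕ) (Y X : PureComplex 𝒜 δ) (n : ℕ) (f : Y →ₗ[𝒜.A] X) : Prop where
  map_mem_gen : ∀ v ∈ Y.gen (n + s), f v ∈ X.gen n
  diff_map_diff : ∀ v ∈ Y.gen (n + s + 1), X.diff (f (Y.diff v)) = 0

theorem exists_linearMap_diff_eq (hδ : StrictMono δ) (hX : X.ExactFrom 0) {U : Type*}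
    [AddCommGroup U] [Module (ZeroRing 𝒜) U] (g : U →ₗ[ZeroRing 𝒜] X)
    (hg : ∀ u, ∃ w ∈ X.gen (n + 1), X.diff w = g u) :
    ∃ h : U →ₗ[ZeroRing 𝒜] X, ∀ u, h u ∈ X.gen (n + 1) ∧ X.diff (h u) = g u := by
  let D : X.gen (n + 1) →ₗ[ZeroRing 𝒜] X :=
    X.diff.restrictScalars (ZeroRing 𝒜) ∘ₗ (X.gen (n + 1)).subtype
  have hD : Function.Injective D := (injective_iff_map_eq_zero D).2 fun w hw =>
    Subtype.ext (hX.eq_zero_of_diff_eq_zero hδ (Nat.zero_le _) w.2 hw)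
  have hgD : ∀ u, g u ∈ LinearMap.range D := fun u => by
    obtain ⟨w, hw, hwu⟩ := hg u
    exact ⟨⟨w, hw⟩, hwu⟩
  let h := (LinearEquiv.ofInjective D hD).symm.toLinearMap ∘ₗ g.codRestrict _ hgD
  refine ⟨(X.gen (n + 1)).subtype ∘ₗ h, fun u => ⟨(h u).2, ?_⟩⟩
  exact congrArg Subtype.val
    ((LinearEquiv.ofInjective D hD).apply_symm_apply (g.codRestrict _ hgD u))

theorem IsChainMapAt.exists_succ (hs : IsJumpPeriod δ s) (hX : X.ExactFrom 0)
    {f : Y →ₗ[𝒜.A] X} (hf : IsChainMapAt s Y X n f) :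
    ∃ f', IsChainMapAt s Y X (n + 1) f' ∧
      ∀ v ∈ Y.gen (n + s + 1), X.diff (f' v) = f (Y.diff v) := by
  have hδ : δ n < δ (n + 1) := hs.strictMono n.lt_succ_self
  have hpre : ∀ v : Y.gen (n + s + 1), ∃ w ∈ X.gen (n + 1), X.diff w = f (Y.diff v) := by
    rintro ⟨v, hv⟩
    have hfv : f (Y.diff v) ∈ X.piece n (δ (n + 1)) := by
      refine map_mem_gradedSpan_of_mapsTo f hf.map_mem_gen ?_ (Y.diff_gen_succ _ v hv)
      rw [Nat.add_right_comm, hs.map_add, hs.map_add]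
      ring
    have hpos : n = 0 → δ 0 < δ (n + 1) := by rintro rfl; exact hδ
    simpa only [piece_self] using hX n n.zero_le _ hpos _ hfv (hf.diff_map_diff v hv)
  obtain ⟨h, hh⟩ := exists_linearMap_diff_eq hs.strictMono hX
    ((f ∘ₗ Y.diff).restrictScalars (ZeroRing 𝒜) ∘ₗ (Y.gen (n + s + 1)).subtype) hpre
  obtain ⟨f', hf'⟩ := Y.exists_extend_single _ h
  have hdiff : ∀ v ∈ Y.gen (n + s + 1), X.diff (f' v) = f (Y.diff v) := fun v hv => by
    rw [hf' ⟨v, hv⟩]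
    exact (hh ⟨v, hv⟩).2
  refine ⟨f', ⟨fun v hv => ?_, fun v hv => ?_⟩, hdiff⟩
  · rw [Nat.add_right_comm] at hv
    rw [hf' ⟨v, hv⟩]
    exact (hh ⟨v, hv⟩).1
  · rw [show n + 1 + s + 1 = n + s + 1 + 1 by ring] at hv
    have hcomp : X.diff (f' (Y.diff v)) = f (Y.diff (Y.diff v)) :=
      eqOn_gradedSpan (f := X.diff ∘ₗ f') (g := f ∘ₗ Y.diff) hdiff (Y.diff_gen_succ _ v hv)
    rw [hcomp, Y.diff_diff, map_zero]

theorem exists_isChainMap_of_seq (φ : ℕ → (Y →ₗ[𝒜.A] X))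
    (hmem : ∀ n, ∀ v ∈ Y.gen (n + s), φ n v ∈ X.gen n)
    (hdiff : ∀ n, ∀ v ∈ Y.gen (n + s + 1), X.diff (φ (n + 1) v) = φ n (Y.diff v)) :
    ∃ f, IsChainMap s Y X f ∧ ∀ n, ∀ v ∈ Y.gen (n + s), f v = φ n v := by
  obtain ⟨f, hf⟩ := Y.exists_extend X fun m =>
    if s ≤ m then (φ (m - s)).restrictScalars (ZeroRing 𝒜) ∘ₗ (Y.gen m).subtype else 0
  have hlt : ∀ m < s, ∀ v ∈ Y.gen m, f v = 0 := fun m hm v hv => by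
    rw [hf m ⟨v, hv⟩, if_neg (by omega)]; rfl
  have hge : ∀ n, ∀ v ∈ Y.gen (n + s), f v = φ n v := fun n v hv => by
    rw [hf _ ⟨v, hv⟩, if_pos (by omega), Nat.add_sub_cancel]; rfl
  have hf_mem : ∀ n, ∀ v ∈ Y.gen (n + s), f v ∈ X.gen n := fun n v hv => by
    rw [hge n v hv]; exact hmem n v hv
  have hle : ∀ m ≤ s, ∀ v ∈ Y.gen m, f (Y.diff v) = 0 := by
    rintro (_ | m) hm v hv
    · rw [Y.diff_gen_zero v hv, map_zero]
    · exact map_eq_zero_of_mem_gradedSpan (hlt m (by omega)) (Y.diff_gen_succ m v hv)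
  refine ⟨f, ⟨hlt, hf_mem, LinearMap.congr_fun (f := f ∘ₗ Y.diff) (g := X.diff ∘ₗ f) ?_⟩, hge⟩
  refine hom_ext fun m v hv => ?_
  rw [LinearMap.comp_apply, LinearMap.comp_apply]
  rcases lt_trichotomy m s with h | rfl | h
  · rw [hle m h.le v hv, hlt m h v hv, map_zero]
  · rw [hle m le_rfl v hv, X.diff_gen_zero _ (hf_mem 0 v (by rwa [zero_add]))]
  · obtain ⟨n, rfl⟩ : ∃ n, m = n + s + 1 := ⟨m - s - 1, by omega⟩
    rw [hge (n + 1) v (by rwa [Nat.add_right_comm]), hdiff n v hv]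
    exact eqOn_gradedSpan (hge n) (Y.diff_gen_succ _ v hv)

theorem exists_isChainMap (hs : IsJumpPeriod δ s) (hX : X.ExactFrom 0)
    (u : Y.gen s →ₗ[ZeroRing 𝒜] X) (hu : ∀ v, u v ∈ X.gen 0) :
    ∃ f, IsChainMap s Y X f ∧ ∀ v : Y.gen s, f v = u v := by
  obtain ⟨f₀, hf₀⟩ := Y.exists_extend_single s u
  have hf₀_mem : ∀ v ∈ Y.gen s, f₀ v ∈ X.gen 0 := fun v hv => by rw [hf₀ ⟨v, hv⟩]; exact hu _
  have start : IsChainMapAt s Y X 0 f₀ := by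
    refine ⟨by simpa using hf₀_mem, fun v hv => ?_⟩
    rw [zero_add] at hv
    exact map_eq_zero_of_mem_gradedSpan (f := X.diff ∘ₗ f₀)
      (fun w hw => X.diff_gen_zero _ (hf₀_mem w hw)) (Y.diff_gen_succ _ v hv)
  choose next next_at next_diff using fun n (f : {f // IsChainMapAt s Y X n f}) =>
    f.2.exists_succ hs hX
  let φ : ∀ n, {f // IsChainMapAt s Y X n f} := fun n =>
    Nat.rec ⟨f₀, start⟩ (fun n f => ⟨next n f, next_at n f⟩) n
  obtain ⟨f, hf, hfφ⟩ := exists_isChainMap_of_seq (fun n => (φ n).1)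
    (fun n => (φ n).2.map_mem_gen) fun n => next_diff n (φ n)
  refine ⟨f, hf, fun v => ?_⟩
  rw [hfφ 0 v (by rw [zero_add]; exact v.2)]
  exact hf₀ v

end PureComplex

/-! ### Subcomplexes, quotients and covers -/

section Pi

variable {ι : Type*} {Y : Type*} [AddCommGroup Y] [Module 𝒜.A Y] {V : Submodule (ZeroRing 𝒜) Y}

theorem single_mem_pi [DecidableEq ι] (k : ι) {v : Y} (hv : v ∈ V) :
    (Pi.single k v : ι → Y) ∈ Submodule.pi (R := ZeroRing 𝒜) Set.univ fun _ => V := by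
  rw [Submodule.mem_pi]
  intro l _
  rw [Pi.single_apply]
  split_ifs
  exacts [hv, V.zero_mem]

theorem mem_gradedSpan_pi [Finite ι] {s j : ℕ} {x : ι → Y} (hx : ∀ k, x k ∈ gradedSpan V s j) :
    x ∈ gradedSpan (Submodule.pi (R := ZeroRing 𝒜) Set.univ fun _ : ι => V) s j := by
  classical
  cases nonempty_fintype ι
  rw [← Finset.univ_sum_single x]
  exact Submodule.sum_mem _ fun k _ => map_mem_gradedSpan_of_mapsTo
    (LinearMap.single 𝒜.A (fun _ : ι => Y) k) (fun v => single_mem_pi k) rfl (hx k)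

end Pi

namespace PureComplex

variable {δ : ℕ → ℕ}

section power

variable (X : PureComplex 𝒜 δ) (ι : Type) [Finite ι]

theorem span_iUnion_pi_gen :
    Submodule.span 𝒜.A (⋃ n, (Submodule.pi (R := ZeroRing 𝒜) Set.univ fun _ : ι => X.gen n :
      Set (ι → X))) = ⊤ := by
  classical
  cases nonempty_fintype ι
  rw [eq_top_iff]
  intro x _
  rw [← Finset.univ_sum_single x]
  refine Submodule.sum_mem _ fun k _ => ?_
  have hxk : LinearMap.single 𝒜.A (fun _ : ι => (X : Type)) k (x k) ∈
      (Submodule.span 𝒜.A (⋃ n, (X.gen n : Set X))).map (LinearMap.single 𝒜.A _ k) :=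
    Submodule.mem_map_of_mem (by rw [X.span_gen]; trivial)
  rw [Submodule.map_span, Set.image_iUnion] at hxk
  refine Submodule.span_mono (Set.iUnion_mono fun n => ?_) hxk
  rintro _ ⟨v, hv, rfl⟩
  exact single_mem_pi k hv

theorem exists_extend_pi (Z : Type) [AddCommGroup Z] [Module 𝒜.A Z]
    (u : ∀ n, Submodule.pi (R := ZeroRing 𝒜) Set.univ (fun _ : ι => X.gen n) →ₗ[ZeroRing 𝒜] Z) :
    ∃ f : (ι → X) →ₗ[𝒜.A] Z, ∀ n
      (v : Submodule.pi (R := ZeroRing 𝒜) Set.univ fun _ : ι => X.gen n), f v = u n v := by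
  classical
  cases nonempty_fintype ι
  let incl : ∀ n, ι → (X.gen n →ₗ[ZeroRing 𝒜] _) := fun n k =>
    (LinearMap.single (ZeroRing 𝒜) (fun _ : ι => (X : Type)) k).restrict
      fun _ => single_mem_pi k
  choose f hf using fun k : ι => X.exists_extend Z fun n => u n ∘ₗ incl n k
  refine ⟨∑ k, f k ∘ₗ LinearMap.proj k, fun n v => ?_⟩
  have hv : v = ∑ k, incl n k ⟨v.1 k, v.2 k trivial⟩ := Subtype.ext <| by
    rw [AddSubmonoidClass.coe_finsetSum]
    exact (Finset.univ_sum_single _).symm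
  conv_rhs => rw [hv, map_sum]
  rw [LinearMap.sum_apply]
  exact Finset.sum_congr rfl fun k _ => hf k n ⟨v.1 k, v.2 k trivial⟩

/-- The direct sum of copies of `X` indexed by a finite type. -/
def power : PureComplex 𝒜 δ where
  carrier := ι → X
  gen n := Submodule.pi (R := ZeroRing 𝒜) Set.univ fun _ => X.gen n
  gen_fg n := Submodule.fg_pi fun _ => X.gen_fg n
  span_gen := X.span_iUnion_pi_gen ι
  exists_extend Z _ _ u := X.exists_extend_pi ι Z u
  diff := X.diff.compLeft ι
  diff_gen_zero _ hv := funext fun k => X.diff_gen_zero _ (hv k trivial)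
  diff_gen_succ n _ hv := mem_gradedSpan_pi fun k => X.diff_gen_succ n _ (hv k trivial)
  diff_diff x := funext fun k => X.diff_diff (x k)

theorem isChainMap_single [DecidableEq ι] (k : ι) :
    IsChainMap 0 X (X.power ι) (LinearMap.single 𝒜.A (fun _ : ι => (X : Type)) k) :=
  .of_shift_zero (fun _ _ => single_mem_pi k) fun y =>
    funext fun l => (Pi.apply_single (fun _ => X.diff) (fun _ => map_zero _) k y l).symm

theorem isChainMap_proj (k : ι) : IsChainMap 0 (X.power ι) X (LinearMap.proj k) :=
  .of_shift_zero (fun _ _ hv => hv k trivial) fun _ => rfl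

variable {X} in
theorem ExactFrom.power {s : ℕ} (hX : X.ExactFrom s) : (X.power ι).ExactFrom s := by
  intro n hn j hj x hx hd
  choose y hy hy' using fun k => hX n hn j hj (x k) ((X.isChainMap_proj ι k).map_mem_piece_zero hx)
    (congrFun hd k)
  exact ⟨y, mem_gradedSpan_pi hy, funext hy'⟩

end power

variable {X Y P Z : PureComplex 𝒜 δ} {s n j : ℕ}

theorem ExactFrom.of_retract (hZ : Z.ExactFrom s) {i : P →ₗ[𝒜.A] Z} {r : Z →ₗ[𝒜.A] P}
    (hi : IsChainMap 0 P Z i) (hr : IsChainMap 0 Z P r) (hri : r ∘ₗ i = LinearMap.id) :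
    P.ExactFrom s := by
  intro n hn j hj x hx hd
  obtain ⟨y, hy, hyx⟩ := hZ n hn j hj (i x) (hi.map_mem_piece_zero hx)
    (by rw [← hi.map_diff, hd, map_zero])
  exact ⟨r y, hr.map_mem_piece_zero hy,
    by rw [← hr.map_diff, hyx]; exact LinearMap.congr_fun hri x⟩

section Cokernel

variable {f : Y →ₗ[𝒜.A] P}

theorem exists_extend_cokernel (hf : IsChainMap s Y P f)
    (Z : Type) [AddCommGroup Z] [Module 𝒜.A Z]
    (u : ∀ n, (P.gen n).map ((LinearMap.range f).mkQ.restrictScalars (ZeroRing 𝒜)) →ₗ[ZeroRing 𝒜]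
      Z) :
    ∃ g : (P ⧸ LinearMap.range f) →ₗ[𝒜.A] Z, ∀ n
      (v : (P.gen n).map ((LinearMap.range f).mkQ.restrictScalars (ZeroRing 𝒜))), g v = u n v := by
  obtain ⟨g, hg⟩ := P.exists_extend Z fun n => u n ∘ₗ
    ((LinearMap.range f).mkQ.restrictScalars (ZeroRing 𝒜)).restrict fun _ =>
      Submodule.mem_map_of_mem
  have hgf : g ∘ₗ f = 0 := by
    refine hom_ext fun n v hv => ?_
    rw [LinearMap.comp_apply]
    rcases lt_or_ge n s with h | h
    · rw [hf.eq_zero_of_lt n h v hv, map_zero]; rfl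
    · obtain ⟨m, rfl⟩ := Nat.exists_eq_add_of_le' h
      refine (hg m ⟨f v, hf.map_mem_gen m v hv⟩).trans ?_
      rw [LinearMap.comp_apply]
      refine (congrArg (u m) (Subtype.ext ?_)).trans (map_zero (u m))
      exact (Submodule.Quotient.mk_eq_zero _).2 ⟨v, rfl⟩
  refine ⟨(LinearMap.range f).liftQ g (LinearMap.range_le_ker_iff.2 hgf), ?_⟩
  rintro n ⟨_, v, hv, rfl⟩
  exact hg n ⟨v, hv⟩

variable (hf : IsChainMap s Y P f)

/-- The cokernel of a chain map. Its terms are again projective: a chain map sends generators to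
generators, and `A_0`-linear maps out of the quotient of the generators extend. -/
def cokernel : PureComplex 𝒜 δ where
  carrier := P ⧸ LinearMap.range f
  gen n := (P.gen n).map ((LinearMap.range f).mkQ.restrictScalars (ZeroRing 𝒜))
  gen_fg n := (P.gen_fg n).map _
  span_gen := by
    have h := congrArg (Submodule.map (LinearMap.range f).mkQ) P.span_gen
    rwa [Submodule.map_span, Submodule.map_top, Submodule.range_mkQ, Set.image_iUnion] at h
  exists_extend := exists_extend_cokernel hf
  diff := (LinearMap.range f).mapQ (LinearMap.range f) P.diff <| by
    rintro _ ⟨y, rfl⟩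
    exact ⟨Y.diff y, hf.map_diff y⟩
  diff_gen_zero := by
    rintro _ ⟨v, hv, rfl⟩
    exact congrArg _ (P.diff_gen_zero v hv)
  diff_gen_succ := by
    rintro n _ ⟨v, hv, rfl⟩
    exact map_mem_gradedSpan_of_mapsTo (LinearMap.range f).mkQ
      (fun _ => Submodule.mem_map_of_mem) rfl (P.diff_gen_succ n v hv)
  diff_diff x := by
    obtain ⟨x, rfl⟩ := Submodule.mkQ_surjective _ x
    exact congrArg _ (P.diff_diff x)

/-- The projection onto the cokernel complex. -/
def cokernelπ : P →ₗ[𝒜.A] cokernel hf := (LinearMap.range f).mkQ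

theorem isChainMap_cokernelπ : IsChainMap 0 P (cokernel hf) (cokernelπ hf) :=
  .of_shift_zero (fun _ v hv => ⟨v, hv, rfl⟩) fun _ => rfl

theorem cokernelπ_eq_zero {x : P} : cokernelπ hf x = 0 ↔ ∃ y, f y = x :=
  (Submodule.Quotient.mk_eq_zero _).trans LinearMap.mem_range

theorem cokernelπ_apply_apply (y : Y) : cokernelπ hf (f y) = 0 := (cokernelπ_eq_zero hf).2 ⟨y, rfl⟩

theorem cokernelπ_surjective : Function.Surjective (cokernelπ hf) := Submodule.mkQ_surjective _

end Cokernel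

section Semisimple

variable [IsSemisimpleRing (ZeroRing 𝒜)] {f : Y →ₗ[𝒜.A] P}

theorem IsChainMap.exists_gen_retraction (hf : IsChainMap s Y P f)
    (hinj : ∀ v ∈ Y.gen (n + s), f v = 0 → v = 0) :
    ∃ r : P.gen n →ₗ[ZeroRing 𝒜] Y.gen (n + s), ∀ v : Y.gen (n + s),
      r ⟨f v, hf.map_mem_gen n v v.2⟩ = v := by
  let g := (f.restrictScalars (ZeroRing 𝒜)).restrict (hf.map_mem_gen n)
  have hg : Function.Injective g := (injective_iff_map_eq_zero g).2 fun v hv =>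
    Subtype.ext (hinj v v.2 (congrArg Subtype.val hv))
  obtain ⟨r, hr⟩ := IsSemisimpleModule.extension_property g hg LinearMap.id
  exact ⟨r, LinearMap.congr_fun hr⟩

theorem IsChainMap.eq_zero_of_map_eq_zero (hδ : StrictMono δ) (hY : Y.ExactFrom (s + 1))
    (hf : IsChainMap s Y P f) (hinj : ∀ v ∈ Y.gen s, f v = 0 → v = 0) (n : ℕ) :
    ∀ v ∈ Y.gen (n + s), f v = 0 → v = 0 := by
  induction n with
  | zero => simpa using hinj
  | succ n ih =>
    intro v hv hfv
    obtain ⟨r₀, hr₀⟩ := hf.exists_gen_retraction ih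
    obtain ⟨r, hr⟩ := P.exists_extend_single n ((Y.gen (n + s)).subtype ∘ₗ r₀)
    have hrf : ∀ w ∈ Y.gen (n + s), r (f w) = w := fun w hw =>
      (hr ⟨f w, hf.map_mem_gen n w hw⟩).trans (congrArg Subtype.val (hr₀ ⟨w, hw⟩))
    rw [Nat.add_right_comm] at hv
    have hrfd : r (f (Y.diff v)) = Y.diff v :=
      eqOn_gradedSpan (f := r ∘ₗ f) (g := LinearMap.id) hrf (Y.diff_gen_succ _ v hv)
    refine hY.eq_zero_of_diff_eq_zero hδ (by omega) hv ?_
    rw [← hrfd, hf.map_diff, hfv, map_zero, map_zero]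

/-- The left inverse need not commute with the differentials. -/
theorem IsChainMap.exists_retraction (hδ : StrictMono δ) (hY : Y.ExactFrom (s + 1))
    (hf : IsChainMap s Y P f) (hinj : ∀ v ∈ Y.gen s, f v = 0 → v = 0) :
    ∃ r : P →ₗ[𝒜.A] Y, (∀ n, ∀ v ∈ P.gen n, r v ∈ Y.gen (n + s)) ∧
      ∀ n, ∀ v ∈ Y.gen (n + s), r (f v) = v := by
  choose r₀ hr₀ using fun n =>
    hf.exists_gen_retraction (hf.eq_zero_of_map_eq_zero hδ hY hinj n)
  obtain ⟨r, hr⟩ := P.exists_extend Y fun n => (Y.gen (n + s)).subtype ∘ₗ r₀ n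
  refine ⟨r, fun n v hv => ?_, fun n v hv => ?_⟩
  · rw [hr n ⟨v, hv⟩]
    exact (r₀ n _).2
  · rw [hr n ⟨f v, hf.map_mem_gen n v hv⟩]
    exact congrArg Subtype.val (hr₀ n ⟨v, hv⟩)

theorem IsChainMap.exists_map_diff_eq (hs : IsJumpPeriod δ s) (hY : Y.ExactFrom (s + 1))
    (hf : IsChainMap s Y P f) (hinj : ∀ v ∈ Y.gen s, f v = 0 → v = 0) {z : P}
    (hz : z ∈ P.piece (n + 2) j) (hd : ∃ y, f y = P.diff z) :
    ∃ y ∈ Y.piece (n + 2 + s) (j + δ s), f (Y.diff y) = P.diff z := by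
  obtain ⟨r, hr, hrf⟩ := hf.exists_retraction hs.strictMono hY hinj
  have hfrf : f ∘ₗ r ∘ₗ f = f := by
    refine hom_ext fun m v hv => ?_
    rw [LinearMap.comp_apply, LinearMap.comp_apply]
    rcases lt_or_ge m s with h | h
    · rw [hf.eq_zero_of_lt m h v hv, map_zero, map_zero]
    · obtain ⟨m, rfl⟩ := Nat.exists_eq_add_of_le' h
      rw [hrf m v hv]
  have hfr : f (r (P.diff z)) = P.diff z := by
    obtain ⟨y, hy⟩ := hd
    rw [← hy]
    exact LinearMap.congr_fun hfrf y
  have hrz : r (P.diff z) ∈ Y.piece (n + s + 1) (j + δ s) := by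
    refine map_mem_gradedSpan_of_mapsTo (W := Y.gen (n + s + 1)) r (fun v hv => ?_) ?_
      (diff_mem_piece hz)
    · rw [Nat.add_right_comm]
      exact hr (n + 1) v hv
    · rw [Nat.add_right_comm, hs.map_add]
      ring
  have hdr : Y.diff (r (P.diff z)) = 0 := by
    have h : r (f (Y.diff (r (P.diff z)))) = Y.diff (r (P.diff z)) :=
      eqOn_gradedSpan (f := r ∘ₗ f) (g := LinearMap.id) (hrf n) (diff_mem_piece hrz)
    rw [← h, hf.map_diff, hfr, P.diff_diff, map_zero]
  obtain ⟨y, hy, hyr⟩ := hY (n + s + 1) (by omega) _ (by omega) _ hrz hdr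
  rw [show n + s + 1 + 1 = n + 2 + s by ring] at hy
  exact ⟨y, hy, by rw [hyr, hfr]⟩

theorem cokernel_exactFrom (hs : IsJumpPeriod δ s) (hY : Y.ExactFrom (s + 1))
    (hP : P.ExactFrom 2) (hf : IsChainMap s Y P f) (hinj : ∀ v ∈ Y.gen s, f v = 0 → v = 0) :
    (cokernel hf).ExactFrom 2 := by
  intro n hn j hj x hx hd
  obtain ⟨n, rfl⟩ := Nat.exists_eq_add_of_le' hn
  have hπ := isChainMap_cokernelπ hf
  obtain ⟨z, hz, rfl⟩ := exists_gradedSpan_map_eq (V := P.gen (n + 2)) (f := cokernelπ hf)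
    (fun w hw => hw) hx
  rw [← hπ.map_diff, cokernelπ_eq_zero] at hd
  obtain ⟨y, hy, hyz⟩ := hf.exists_map_diff_eq hs hY hinj hz hd
  obtain ⟨w, hw, hwz⟩ := hP (n + 2) hn j hj (z - f y)
    (sub_mem hz (hf.map_mem_piece hs hy)) (by rw [map_sub, ← hf.map_diff, hyz, sub_self])
  refine ⟨cokernelπ hf w, hπ.map_mem_piece_zero hw, ?_⟩
  rw [← hπ.map_diff, hwz, map_sub, cokernelπ_apply_apply, sub_zero]

end Semisimple

section Cover

/-- `P` is a direct summand of a finite direct sum of copies of `X`. -/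
def IsRetractOfPower (P X : PureComplex 𝒜 δ) : Prop :=
  ∃ (m : ℕ) (i : Fin m → P →ₗ[𝒜.A] X) (r : Fin m → X →ₗ[𝒜.A] P),
    (∀ k, IsChainMap 0 P X (i k)) ∧ (∀ k, IsChainMap 0 X P (r k)) ∧
      ∑ k, r k ∘ₗ i k = LinearMap.id

theorem isRetractOfPower_of_retract {m : ℕ} {i : P →ₗ[𝒜.A] X.power (Fin m)}
    {r : X.power (Fin m) →ₗ[𝒜.A] P} (hi : IsChainMap 0 P (X.power (Fin m)) i)
    (hr : IsChainMap 0 (X.power (Fin m)) P r) (hri : r ∘ₗ i = LinearMap.id) :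
    P.IsRetractOfPower X := by
  refine ⟨m, fun k => LinearMap.proj k ∘ₗ i,
    fun k => r ∘ₗ LinearMap.single 𝒜.A (fun _ => (X : Type)) k,
    fun k => (X.isChainMap_proj _ k).comp hi, fun k => ?_, ?_⟩
  · simpa using hr.comp (X.isChainMap_single _ k)
  · refine LinearMap.ext fun x => ?_
    rw [LinearMap.sum_apply, ← hri]
    exact (map_sum r _ Finset.univ).symm.trans (congrArg r (Finset.univ_sum_single (i x)))

/-- `f : Y → P` is the projective cover, in the category of chain maps, of the part of `Y` of
homological index at least `s`: it is an isomorphism from the generators of `Y` of index `s` onto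
those of the exact complex `P`, a direct summand of a power of `X`. -/
structure IsCover (s : ℕ) (X : PureComplex 𝒜 δ) (f : Y →ₗ[𝒜.A] P) : Prop where
  isChainMap : IsChainMap s Y P f
  exactFrom : P.ExactFrom 0
  isRetractOfPower : P.IsRetractOfPower X
  eq_zero_of_map_eq_zero : ∀ v ∈ Y.gen s, f v = 0 → v = 0
  exists_map_eq : ∀ w ∈ P.gen 0, ∃ v ∈ Y.gen s, f v = w

theorem exists_retract_of_isIdempotent {e : Z →ₗ[𝒜.A] Z} (he : IsChainMap 0 Z Z e)
    (hee : e ∘ₗ e = e) :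
    ∃ (P : PureComplex 𝒜 δ) (i : P →ₗ[𝒜.A] Z) (r : Z →ₗ[𝒜.A] P), IsChainMap 0 P Z i ∧
      IsChainMap 0 Z P r ∧ r ∘ₗ i = LinearMap.id ∧ i ∘ₗ r = e := by
  have hg : IsChainMap 0 Z Z (LinearMap.id + -e) := IsChainMap.id.add he.neg
  have hker : LinearMap.range (LinearMap.id + -e) ≤ LinearMap.ker e := by
    refine LinearMap.range_le_ker_iff.2 ?_
    rw [LinearMap.comp_add, LinearMap.comp_neg, hee, LinearMap.comp_id, add_neg_cancel]
  let i : cokernel hg →ₗ[𝒜.A] Z := (LinearMap.range (LinearMap.id + -e)).liftQ e hker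
  have hir : ∀ z, i (cokernelπ hg z) = e z := fun z => rfl
  have hre : ∀ z, cokernelπ hg (e z) = cokernelπ hg z := fun z => by
    rw [eq_comm, ← sub_eq_zero, ← map_sub, cokernelπ_eq_zero]
    exact ⟨z, (sub_eq_add_neg _ _).symm⟩
  refine ⟨cokernel hg, i, cokernelπ hg, .of_shift_zero ?_ fun x => ?_, isChainMap_cokernelπ hg,
    LinearMap.ext fun x => ?_, LinearMap.ext hir⟩
  · rintro n _ ⟨v, hv, rfl⟩
    exact he.map_mem_gen n v hv
  · obtain ⟨z, rfl⟩ := cokernelπ_surjective hg x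
    rw [← (isChainMap_cokernelπ hg).map_diff, hir, hir, he.map_diff]
  · obtain ⟨z, rfl⟩ := cokernelπ_surjective hg x
    rw [LinearMap.comp_apply, hir, hre]
    rfl

variable [IsSemisimpleRing (ZeroRing 𝒜)]

theorem exists_retract_power_gen_zero (E : X.gen 0 ≃ₗ[ZeroRing 𝒜] ZeroRing 𝒜) (V : Type*)
    [AddCommGroup V] [Module (ZeroRing 𝒜) V] [Module.Finite (ZeroRing 𝒜) V] :
    ∃ (m : ℕ) (i : V →ₗ[ZeroRing 𝒜] (X.power (Fin m)).gen 0)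
      (r : (X.power (Fin m)).gen 0 →ₗ[ZeroRing 𝒜] V), ∀ v, r (i v) = v := by
  obtain ⟨m, π, hπ⟩ := Module.Finite.exists_fin' (ZeroRing 𝒜) V
  obtain ⟨σ, hσ⟩ := IsSemisimpleModule.lifting_property π hπ LinearMap.id
  let i : V →ₗ[ZeroRing 𝒜] (X.power (Fin m)).gen 0 :=
    (LinearMap.pi fun k => (X.gen 0).subtype ∘ₗ E.symm.toLinearMap ∘ₗ LinearMap.proj k ∘ₗ σ)
      |>.codRestrict _ fun v k _ => (E.symm (σ v k)).2
  let r : (X.power (Fin m)).gen 0 →ₗ[ZeroRing 𝒜] V := π ∘ₗ LinearMap.pi fun k =>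
    E.toLinearMap ∘ₗ ((LinearMap.proj k : (Fin m → X) →ₗ[ZeroRing 𝒜] X).restrict
      fun _ hv => hv k trivial)
  refine ⟨m, i, r, fun v => Eq.trans (congrArg π (funext fun k => ?_)) (LinearMap.congr_fun hσ v)⟩
  exact E.apply_symm_apply (σ v k)

theorem exists_isCover (hs : IsJumpPeriod δ s) (hX : X.ExactFrom 0)
    (E : X.gen 0 ≃ₗ[ZeroRing 𝒜] ZeroRing 𝒜) (Y : PureComplex 𝒜 δ) :
    ∃ (P : PureComplex 𝒜 δ) (f : Y →ₗ[𝒜.A] P), IsCover s X f := by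
  have := Module.Finite.iff_fg.2 (Y.gen_fg s)
  obtain ⟨m, i₀, r₀, hri₀⟩ := exists_retract_power_gen_zero E (Y.gen s)
  have hZ := hX.power (Fin m)
  obtain ⟨e, he, he₀⟩ := exists_isChainMap hs.zero hZ
    (((X.power (Fin m)).gen 0).subtype ∘ₗ i₀ ∘ₗ r₀) fun v => (i₀ (r₀ v)).2
  obtain ⟨g, hg, hg₀⟩ := exists_isChainMap hs hZ
    (((X.power (Fin m)).gen 0).subtype ∘ₗ i₀) fun v => (i₀ v).2
  have hei₀ : ∀ v, e (i₀ v) = i₀ v := fun v =>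
    (he₀ (i₀ v)).trans (congrArg (fun w => (i₀ w : X.power (Fin m))) (hri₀ v))
  have hee : e ∘ₗ e = e := by
    refine (he.comp he).eq_of_head_eq hs.strictMono hZ he fun v hv => ?_
    have hev : e v = i₀ (r₀ ⟨v, hv⟩) := he₀ ⟨v, hv⟩
    rw [LinearMap.comp_apply, hev, hei₀]
  obtain ⟨P, i, r, hi, hr, hri, rfl⟩ := exists_retract_of_isIdempotent he hee
  refine ⟨P, r ∘ₗ g, by simpa using hr.comp hg, hZ.of_retract hi hr hri,
    isRetractOfPower_of_retract hi hr hri, fun v hv hfv => ?_, fun w hw => ?_⟩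
  · have hi₀v : i₀ ⟨v, hv⟩ = 0 := Subtype.ext <| by
      rw [← hei₀, ← show g v = i₀ ⟨v, hv⟩ from hg₀ ⟨v, hv⟩]
      exact (congrArg i hfv).trans (map_zero i)
    exact congrArg Subtype.val ((hri₀ ⟨v, hv⟩).symm.trans (by rw [hi₀v, map_zero]))
  · have hiw : i w ∈ (X.power (Fin m)).gen 0 := hi.map_mem_gen 0 w hw
    refine ⟨r₀ ⟨i w, hiw⟩, (r₀ ⟨i w, hiw⟩).2, ?_⟩
    have hriw : r (i w) = w := LinearMap.congr_fun hri w
    have hgw : g (r₀ ⟨i w, hiw⟩) = i (r (i w)) := (hg₀ _).trans (he₀ ⟨i w, hiw⟩).symm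
    rw [LinearMap.comp_apply, hgw, hriw, hriw]

end Cover

end PureComplex

/-! ### The algebra and the modules of chain maps -/

namespace GMod

variable (M : 𝒜.GMod)

instance : DirectSum.Decomposition M.grading :=
  DirectSum.IsInternal.chooseDecomposition M.grading
    (DirectSum.isInternal_submodule_of_iSupIndep_of_iSup_eq_top M.indep M.sup_eq_top)

/-- The homogeneous component of degree `j`. -/
def proj (j : ℤ) : M.M →ₗ[F] M.M where
  toFun x := DirectSum.decompose M.grading x j
  map_add' x y := by simp only [DirectSum.decompose_add, DirectSum.add_apply, Submodule.coe_add]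
  map_smul' a x := by
    rw [DirectSum.decompose_smul, DFinsupp.smul_apply, Submodule.coe_smul, RingHom.id_apply]

variable {M} {i : ℕ} {j k : ℤ} {x : M.M}

theorem proj_mem (j : ℤ) (x : M.M) : M.proj j x ∈ M.grading j :=
  (DirectSum.decompose M.grading x j).2

theorem proj_of_mem (h : x ∈ M.grading j) : M.proj j x = x :=
  DirectSum.decompose_of_mem_same M.grading h

theorem proj_of_mem_ne (h : x ∈ M.grading k) (hkj : k ≠ j) : M.proj j x = 0 :=
  DirectSum.decompose_of_mem_ne M.grading h hkj

theorem induction_on {p : M.M → Prop} (x : M.M) (mem : ∀ j, ∀ x ∈ M.grading j, p x) (zero : p 0)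
    (add : ∀ x y, p x → p y → p (x + y)) : p x :=
  Submodule.iSup_induction M.grading (motive := p) (M.sup_eq_top.ge trivial) mem zero add

theorem proj_smul {a : 𝒜.A} (ha : a ∈ 𝒜.grading i) (h : i + j = k) (x : M.M) :
    M.proj k (a • x) = a • M.proj j x := by
  subst h
  induction x using induction_on with
  | zero => simp only [smul_zero, map_zero]
  | add x y hx hy => simp only [smul_add, map_add, hx, hy]
  | mem l x hx =>
    rcases eq_or_ne l j with rfl | h
    · rw [proj_of_mem hx, proj_of_mem (M.smul_mem ha hx)]
    · rw [proj_of_mem_ne hx h, smul_zero, proj_of_mem_ne (M.smul_mem ha hx) (by omega)]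

theorem mem_of_proj_mem {Q : AddSubgroup M.M} (h : ∀ j, M.proj j x ∈ Q) : x ∈ Q := by
  classical
  rw [← DirectSum.sum_support_decompose M.grading x]
  exact sum_mem fun j _ => h j

end GMod

namespace GHom

variable {M N : 𝒜.GMod}

theorem map_proj (f : GHom M N) (j : ℤ) (x : M.M) : f.lin (M.proj j x) = N.proj j (f.lin x) := by
  induction x using GMod.induction_on with
  | zero => simp only [map_zero]
  | add x y hx hy => simp only [map_add, hx, hy]
  | mem l x hx =>
    by_cases h : l = j
    · subst h
      rw [GMod.proj_of_mem hx, GMod.proj_of_mem (f.grad _ _ hx)]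
    · rw [GMod.proj_of_mem_ne hx h, GMod.proj_of_mem_ne (f.grad _ _ hx) h, map_zero]

theorem surjective_of_homogeneous (f : GHom M N)
    (h : ∀ j, ∀ y ∈ N.grading j, ∃ x, f.lin x = y) : Function.Surjective f.lin := by
  refine LinearMap.range_eq_top.1 (eq_top_iff.2 fun y _ => ?_)
  induction y using GMod.induction_on with
  | zero => exact zero_mem _
  | add x y hx hy => exact add_mem (hx trivial) (hy trivial)
  | mem j y hy => exact h j y hy

theorem ker_le_of_homogeneous (f : GHom M N) {Q : Submodule 𝒜.A M.M}
    (h : ∀ j, ∀ x ∈ M.grading j, f.lin x = 0 → x ∈ Q) : LinearMap.ker f.lin ≤ Q := by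
  refine fun x hx => GMod.mem_of_proj_mem (Q := Q.toAddSubgroup) fun j => ?_
  refine h j _ (GMod.proj_mem j x) ?_
  rw [f.map_proj, LinearMap.mem_ker.1 hx, map_zero]

end GHom

theorem mem_jideal_iff {a : 𝒜.A} :
    a ∈ 𝒜.jideal ↔ (DirectSum.decompose 𝒜.grading a 0 : 𝒜.A) = 0 := by
  rw [← GradedRing.proj_apply]
  exact HomogeneousIdeal.mem_irrelevant_iff 𝒜.grading a

theorem mem_jideal {i : ℕ} (hi : i ≠ 0) {a : 𝒜.A} (ha : a ∈ 𝒜.grading i) : a ∈ 𝒜.jideal :=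
  mem_jideal_iff.2 (DirectSum.decompose_of_mem_ne 𝒜.grading ha hi)

theorem sub_decompose_zero_mem_jideal (a : 𝒜.A) :
    a - DirectSum.decompose 𝒜.grading a 0 ∈ 𝒜.jideal := by
  rw [mem_jideal_iff, DirectSum.decompose_sub, DirectSum.sub_apply, DirectSum.decompose_coe,
    DirectSum.of_eq_same, sub_self, ZeroMemClass.coe_zero]

section Independence

variable {ι κ α V W : Type*} [AddCommGroup V] [Module F V] [AddCommGroup W] [Module F W]

theorem iSupIndep_extend_bot [CompleteLattice α] {p : ι → α} (hp : iSupIndep p) {e : ι → κ}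
    (he : Function.Injective e) : iSupIndep (Function.extend e p ⊥) := by
  intro j
  by_cases hj : ∃ i, e i = j
  · obtain ⟨i, rfl⟩ := hj
    rw [he.extend_apply]
    refine (hp i).mono_right (iSup₂_le fun k hk => ?_)
    by_cases hk' : ∃ l, e l = k
    · obtain ⟨l, rfl⟩ := hk'
      rw [he.extend_apply]
      exact le_iSup₂_of_le l (fun h => hk (congrArg e h)) le_rfl
    · rw [Function.extend_apply' _ _ _ hk']
      exact bot_le
  · rw [Function.extend_apply' _ _ _ hj]
    exact disjoint_bot_left

theorem iSupIndep_comap {f : W →ₗ[F] V} (hf : Function.Injective f) {p : ι → Submodule F V}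
    (hp : iSupIndep p) : iSupIndep fun i => (p i).comap f := by
  rw [iSupIndep_iff_finsetSum_eq_zero_imp_eq_zero] at hp ⊢
  refine fun s v hv h i hi => hf ?_
  rw [map_zero]
  exact hp s (fun i => f (v i)) hv (by rw [← map_sum, h, map_zero]) i hi

theorem iSup_comap_eq_top [Nonempty ι] {f : W →ₗ[F] V} {p : ι → Submodule F V}
    (hf : LinearMap.range f = ⨆ i, p i) : ⨆ i, (p i).comap f = ⊤ := by
  simpa only [Set.mem_univ, iSup_true] using
    Submodule.biSup_comap_eq_top_of_range_eq_biSup Set.univ Set.univ_nonempty p f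
      (by simpa only [Set.mem_univ, iSup_true] using hf)

/-- An `ℕ`-graded family as a `ℤ`-graded one, with degrees raised by `s`. -/
def intShift (p : ℕ → Submodule F V) (s : ℤ) : ℤ → Submodule F V :=
  Function.extend (fun n : ℕ => (n : ℤ) + s) p ⊥

section intShift

variable {p : ℕ → Submodule F V} {s j : ℤ} {n : ℕ} {x : V}

theorem natCast_add_injective (s : ℤ) : Function.Injective fun n : ℕ => (n : ℤ) + s :=
  fun m n h => by simpa using h

theorem intShift_natCast_add : intShift p s (n + s) = p n :=
  (natCast_add_injective s).extend_apply p ⊥ n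

theorem intShift_of_forall_ne (h : ∀ n : ℕ, (n : ℤ) + s ≠ j) : intShift p s j = ⊥ :=
  Function.extend_apply' _ _ _ fun ⟨n, hn⟩ => h n hn

theorem intShift_induction {P : ∀ j, ∀ x ∈ intShift p s j, Prop}
    (mem : ∀ (n : ℕ) (x : V) (hx : x ∈ p n), P (n + s) x (intShift_natCast_add.ge hx))
    (zero : ∀ j, P j 0 (zero_mem _)) {j : ℤ} {x : V} (hx : x ∈ intShift p s j) : P j x hx := by
  by_cases h : ∃ n : ℕ, (n : ℤ) + s = j
  · obtain ⟨n, rfl⟩ := h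
    exact mem n x (intShift_natCast_add.le hx)
  · obtain rfl : x = 0 := (Submodule.mem_bot F).1
      ((intShift_of_forall_ne fun n hn => h ⟨n, hn⟩).le hx)
    exact zero j

end intShift

end Independence

namespace PureComplex

variable {δ : ℕ → ℕ}

theorem exists_genProj (X : PureComplex 𝒜 δ) (n : ℕ) :
    ∃ π : X →ₗ[𝒜.A] X, (∀ v ∈ X.gen n, π v = v) ∧ ∀ m ≠ n, ∀ v ∈ X.gen m, π v = 0 := by
  obtain ⟨π, hπ⟩ := X.exists_extend X (Function.update (fun _ => 0) n (X.gen n).subtype)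
  refine ⟨π, fun v hv => ?_, fun m hm v hv => ?_⟩
  · exact (hπ n ⟨v, hv⟩).trans (by rw [Function.update_self]; rfl)
  · exact (hπ m ⟨v, hv⟩).trans (by rw [Function.update_of_ne hm]; rfl)

section FModule

instance (X : PureComplex 𝒜 δ) : Module F X := Module.compHom X (algebraMap F 𝒜.A)

instance (X : PureComplex 𝒜 δ) : IsScalarTower F 𝒜.A X :=
  IsScalarTower.of_algebraMap_smul fun _ _ => rfl

/-- The chain maps `Y → X` of homological degree `s`. -/
def chainMaps (Y X : PureComplex 𝒜 δ) (s : ℕ) : Submodule F (Y →ₗ[𝒜.A] X) where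
  carrier := {f | IsChainMap s Y X f}
  add_mem' := IsChainMap.add
  zero_mem' := IsChainMap.zero
  smul_mem' a f hf :=
    { eq_zero_of_lt := fun n hn v hv => by
        rw [LinearMap.smul_apply, hf.eq_zero_of_lt n hn v hv, smul_zero]
      map_mem_gen := fun n v hv => (X.gen n).smul_mem
        (⟨algebraMap F 𝒜.A a, SetLike.algebraMap_mem_graded _ a⟩ : ZeroRing 𝒜)
        (hf.map_mem_gen n v hv)
      map_diff := fun y => by
        rw [LinearMap.smul_apply, LinearMap.smul_apply, hf.map_diff,
          LinearMap.map_smul_of_tower] }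

theorem iSupIndep_chainMaps (Y X : PureComplex 𝒜 δ) : iSupIndep (chainMaps Y X) := by
  rw [iSupIndep_iff_finsetSum_eq_zero_imp_eq_zero]
  refine fun S f hf h s hs => hom_ext fun l v hv => ?_
  rcases lt_or_ge l s with hl | hl
  · exact (hf s hs).eq_zero_of_lt l hl v hv
  obtain ⟨n, rfl⟩ := Nat.exists_eq_add_of_le' hl
  obtain ⟨π, hπ, hπ'⟩ := X.exists_genProj n
  have hsum : ∑ t ∈ S, π (f t v) = π (f s v) := by
    refine Finset.sum_eq_single_of_mem s hs fun t ht hts => ?_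
    rcases lt_or_ge (n + s) t with hlt | hle
    · rw [(hf t ht).eq_zero_of_lt _ hlt v hv, map_zero]
    · obtain ⟨m, hm⟩ := Nat.exists_eq_add_of_le' hle
      exact hπ' m (by omega) _ ((hf t ht).map_mem_gen m v (hm ▸ hv))
  rw [← hπ _ ((hf s hs).map_mem_gen n v hv), ← hsum, ← map_sum, ← LinearMap.sum_apply, h,
    LinearMap.zero_apply, map_zero]

end FModule

section ChainMapAlgebra

variable (c : ℕ) (X Y W : PureComplex 𝒜 δ)

/-- The finite sums of chain maps whose homological degrees are multiples of `c`. -/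
def chainMapSum : Submodule F (Y →ₗ[𝒜.A] X) := ⨆ n, chainMaps Y X (c * n)

variable {c X Y W}

theorem IsChainMap.mem_chainMapSum {n : ℕ} {f : Y →ₗ[𝒜.A] X} (hf : IsChainMap (c * n) Y X f) :
    f ∈ chainMapSum c X Y :=
  Submodule.mem_iSup_of_mem (p := fun n => chainMaps Y X (c * n)) n hf

theorem comp_mem_chainMapSum {g : X →ₗ[𝒜.A] W} {f : Y →ₗ[𝒜.A] X} (hg : g ∈ chainMapSum c W X)
    (hf : f ∈ chainMapSum c X Y) : g ∘ₗ f ∈ chainMapSum c W Y := by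
  induction hg using Submodule.iSup_induction' with
  | zero => exact zero_mem _
  | add g g' _ _ ih ih' => exact add_mem ih ih'
  | mem m g hg =>
    induction hf using Submodule.iSup_induction' with
    | zero => rw [LinearMap.comp_zero]; exact zero_mem _
    | add f f' _ _ ih ih' => rw [LinearMap.comp_add]; exact add_mem ih ih'
    | mem n f hf =>
      refine IsChainMap.mem_chainMapSum (n := m + n) ?_
      rw [mul_add]
      exact IsChainMap.comp hg hf

theorem iSupIndep_chainMaps_mul (hc : 0 < c) : iSupIndep fun n => chainMaps Y X (c * n) :=
  (iSupIndep_chainMaps Y X).comp fun _ _ h => Nat.eq_of_mul_eq_mul_left hc h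

variable (c X Y)

/-- The algebra of endomorphisms of `X` that are sums of chain maps of degrees in `c ℕ`. -/
def chainEnd : Subalgebra F (Module.End 𝒜.A X) where
  carrier := chainMapSum c X X
  mul_mem' := comp_mem_chainMapSum
  add_mem' := add_mem
  algebraMap_mem' a := by
    rw [Algebra.algebraMap_eq_smul_one]
    exact Submodule.smul_mem _ a (IsChainMap.mem_chainMapSum (n := 0) IsChainMap.id)

variable {c} in
/-- `chainEnd c X`, with the chain maps of homological degree `c * n` in degree `n`. -/
def chainEndAlg (hc : 0 < c) : GradedAlg F where
  A := chainEnd c X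
  grading n := (chainMaps X X (c * n)).comap (chainEnd c X).val.toLinearMap
  graded :=
    { one_mem := IsChainMap.id (Y := X)
      mul_mem := fun m n f g hf hg => by
        have := IsChainMap.comp hf hg
        rwa [← mul_add] at this
      toDecomposition := DirectSum.IsInternal.chooseDecomposition _
        (DirectSum.isInternal_submodule_of_iSupIndep_of_iSup_eq_top
          (iSupIndep_comap Subtype.val_injective (iSupIndep_chainMaps_mul hc))
          (iSup_comap_eq_top (Submodule.range_subtype (chainMapSum c X X)))) }

section

variable {c} (hc : 0 < c)

instance : Module (chainEndAlg X hc).A (chainMapSum c X Y) where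
  smul (b : chainEnd c X) f := ⟨b.1 ∘ₗ f.1, comp_mem_chainMapSum b.2 f.2⟩
  one_smul _ := rfl
  mul_smul _ _ _ := rfl
  smul_zero (b : chainEnd c X) := Subtype.ext (LinearMap.comp_zero b.1)
  smul_add (b : chainEnd c X) f g := Subtype.ext (LinearMap.comp_add f.1 g.1 b.1)
  add_smul _ _ _ := rfl
  zero_smul _ := rfl

instance : IsScalarTower F (chainEndAlg X hc).A (chainMapSum c X Y) := ⟨fun _ _ _ => rfl⟩

instance : SMulCommClass (chainEndAlg X hc).A F (chainMapSum c X Y) :=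
  ⟨fun (b : chainEnd c X) a f => Subtype.ext (LinearMap.comp_smul b.1 a f.1)⟩

/-- `chainMapSum c X Y` as a graded module, with the chain maps of homological degree `c * n` in
degree `n + s`. -/
def chainHomMod (s : ℤ) : (chainEndAlg X hc).GMod where
  M := chainMapSum c X Y
  grading := intShift (fun n => (chainMaps Y X (c * n)).comap (chainMapSum c X Y).subtype) s
  sup_eq_top := (iSup_extend_bot (natCast_add_injective s) _).trans
    (iSup_comap_eq_top (Submodule.range_subtype _))
  indep := iSupIndep_extend_bot
    (iSupIndep_comap Subtype.val_injective (iSupIndep_chainMaps_mul hc)) (natCast_add_injective s)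
  smul_mem {i j a f} ha hf := by
    induction hf using intShift_induction with
    | zero j => rw [smul_zero]; exact zero_mem _
    | mem n f hf =>
      have haf := IsChainMap.comp ha hf
      rw [← mul_add] at haf
      rw [← add_assoc, ← Nat.cast_add]
      exact intShift_natCast_add.ge haf

end

end ChainMapAlgebra

end PureComplex

/-! ### Chain maps out of a summand of a power -/

/-- `M` is a direct summand of a finite direct sum of copies of `A` with generators in degree `s`,
expressed by a dual basis. -/
def GMod.HasDualBasis (M : 𝒜.GMod) (s : ℤ) : Prop :=
  ∃ (m : ℕ) (e : Fin m → M.M) (φ : M.M →ₗ[𝒜.A] (Fin m → 𝒜.A)), (∀ k, e k ∈ M.grading s) ∧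
    (∀ n : ℕ, ∀ x ∈ M.grading (n + s), ∀ k, φ x k ∈ 𝒜.grading n) ∧ ∀ x, ∑ k, φ x k • e k = x

namespace GMod.HasDualBasis

variable {M : 𝒜.GMod} {s : ℤ}

theorem genInDeg (h : M.HasDualBasis s) : M.GenInDeg s := by
  obtain ⟨m, e, φ, he, -, hφ⟩ := h
  refine eq_top_iff.2 fun x _ => ?_
  rw [← hφ x]
  exact Submodule.sum_mem _ fun k _ => Submodule.smul_mem _ _ (Submodule.subset_span (he k))

theorem fintypeLinearCombination_comp (h : M.HasDualBasis s) :
    ∃ (m : ℕ) (φ : M.M →ₗ[𝒜.A] (Fin m → 𝒜.A)) (π : (Fin m → 𝒜.A) →ₗ[𝒜.A] M.M),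
      π ∘ₗ φ = LinearMap.id := by
  obtain ⟨m, e, φ, -, -, hφ⟩ := h
  exact ⟨m, φ, Fintype.linearCombination 𝒜.A e, LinearMap.ext fun x => by
    rw [LinearMap.comp_apply, Fintype.linearCombination_apply, hφ, LinearMap.id_apply]⟩

theorem finite (h : M.HasDualBasis s) : Module.Finite 𝒜.A M.M := by
  obtain ⟨m, φ, π, hπ⟩ := h.fintypeLinearCombination_comp
  exact Module.Finite.of_surjective π fun x => ⟨φ x, LinearMap.congr_fun hπ x⟩

theorem projective (h : M.HasDualBasis s) : Module.Projective 𝒜.A M.M := by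
  obtain ⟨m, φ, π, hπ⟩ := h.fintypeLinearCombination_comp
  exact Module.Projective.of_split φ π hπ

theorem mem_jideal_smul_top (h : M.HasDualBasis s) {n : ℕ} (hn : n ≠ 0) {x : M.M}
    (hx : x ∈ M.grading (n + s)) : x ∈ 𝒜.jideal • (⊤ : Submodule 𝒜.A M.M) := by
  obtain ⟨m, e, φ, -, hgr, hφ⟩ := h
  rw [← hφ x]
  exact Submodule.sum_mem _ fun k _ =>
    Submodule.smul_mem_smul (mem_jideal hn (hgr n x hx k)) Submodule.mem_top

end GMod.HasDualBasis

theorem GHom.range_le_jideal_smul_top {M N : 𝒜.GMod} {s : ℤ} {n : ℕ} (f : GHom M N)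
    (hM : M.GenInDeg (n + s)) (hN : N.HasDualBasis s) (hn : n ≠ 0) :
    LinearMap.range f.lin ≤ 𝒜.jideal • (⊤ : Submodule 𝒜.A N.M) := by
  rw [LinearMap.range_eq_map, ← hM, Submodule.map_span, Submodule.span_le]
  rintro _ ⟨x, hx, rfl⟩
  exact hN.mem_jideal_smul_top hn (f.grad _ x hx)

/-- `K → P → M` is a short exact sequence whose middle term is projective and generated in
degree `s`. -/
structure IsGradedSyzygy {M P K : 𝒜.GMod} (s : ℤ) (π : GHom P M) (ι : GHom K P) : Prop where
  hasDualBasis : P.HasDualBasis s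
  surjective : Function.Surjective π.lin
  injective : Function.Injective ι.lin
  exact : LinearMap.range ι.lin = LinearMap.ker π.lin

theorem isKoszulMod_of_forall_exists_isGradedSyzygy (C : ℕ → 𝒜.GMod → Prop)
    (h : ∀ n M, C n M → ∃ (P K : 𝒜.GMod) (π : GHom P M) (ι : GHom K P),
      IsGradedSyzygy n π ι ∧ C (n + 1) K) {M : 𝒜.GMod} (hM : C 0 M) : 𝒜.IsKoszulMod M := by
  choose P K π ι hπι hK using h
  let S : ∀ n, {M // C n M} := fun n => Nat.rec ⟨M, hM⟩ (fun n S => ⟨K n S.1 S.2, hK n S.1 S.2⟩) n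
  let π' n := π n (S n).1 (S n).2
  let ι' n : GHom (S (n + 1)).1 _ := ι n (S n).1 (S n).2
  have hS (n : ℕ) : IsGradedSyzygy n (π' n) (ι' n) := hπι n (S n).1 (S n).2
  let d n : GHom (P (n + 1) (S (n + 1)).1 (S (n + 1)).2) (P n (S n).1 (S n).2) :=
    ⟨(ι' n).lin ∘ₗ (π' (n + 1)).lin,
      fun j x hx => (ι' n).grad j _ ((π' (n + 1)).grad j x hx)⟩
  have hd n : LinearMap.range (d n).lin = LinearMap.ker (π' n).lin :=
    (LinearMap.range_comp_of_range_eq_top _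
      (LinearMap.range_eq_top.2 (hS (n + 1)).surjective)).trans (hS n).exact
  refine ⟨⟨_, d, π' 0, fun n => (hS n).hasDualBasis.finite, fun n => (hS n).hasDualBasis.projective,
    (hS 0).surjective, hd 0, fun n => (hd (n + 1)).trans ?_, fun n => ?_⟩,
    fun n => (hS n).hasDualBasis.genInDeg⟩
  · exact (LinearMap.ker_comp_of_ker_eq_bot _ (LinearMap.ker_eq_bot.2 (hS n).injective)).symm
  · refine (d n).range_le_jideal_smul_top (n := 1) ?_ (hS n).hasDualBasis one_ne_zero
    rw [Nat.cast_one, Int.add_comm, ← Nat.cast_succ]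
    exact (hS (n + 1)).hasDualBasis.genInDeg

namespace PureComplex

variable {δ : ℕ → ℕ} {X Y Y' P : PureComplex 𝒜 δ} {c t : ℕ} (hc : 0 < c) {s s' : ℤ}

theorem mem_chainHomMod_natCast_add {n : ℕ} {f : chainMapSum c X Y} :
    f ∈ (chainHomMod X Y hc s).grading (n + s) ↔ IsChainMap (c * n) Y X f.1 :=
  SetLike.ext_iff.1 intShift_natCast_add f

theorem mem_chainHomMod_self {f : chainMapSum c X Y} :
    f ∈ (chainHomMod X Y hc s).grading s ↔ IsChainMap 0 Y X f.1 := by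
  simpa using mem_chainHomMod_natCast_add hc (n := 0) (s := s) (f := f)

theorem IsRetractOfPower.hasDualBasis (hP : P.IsRetractOfPower X) :
    (chainHomMod X P hc s).HasDualBasis s := by
  obtain ⟨m, i, r, hi, hr, hri⟩ := hP
  have hr_mem (k : Fin m) : r k ∈ chainMapSum c P X := IsChainMap.mem_chainMapSum (n := 0) (hr k)
  let φ : (chainHomMod X P hc s).M →ₗ[(chainEndAlg X hc).A]
      (Fin m → (chainEndAlg X hc).A) :=
    { toFun := fun (g : chainMapSum c X P) k =>
        (⟨g.1 ∘ₗ r k, comp_mem_chainMapSum g.2 (hr_mem k)⟩ : chainEnd c X)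
      map_add' := fun _ _ => rfl
      map_smul' := fun _ _ => rfl }
  refine ⟨m, fun k => ⟨i k, IsChainMap.mem_chainMapSum (n := 0) (hi k)⟩, φ,
    fun k => (mem_chainHomMod_self hc).2 (hi k), fun n g hg k => ?_, fun g => Subtype.ext ?_⟩
  · exact ((mem_chainHomMod_natCast_add hc).1 hg).comp (hr k)
  · refine (map_sum (chainMapSum c X P).subtype _ _).trans ?_
    refine LinearMap.ext fun x => (LinearMap.sum_apply _ _ x).trans ?_
    change ∑ k, g.1 ((r k ∘ₗ i k) x) = g.1 x
    rw [← map_sum, ← LinearMap.sum_apply, hri, LinearMap.id_apply]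

/-- Precomposition with a chain map of homological degree `c * t`, on graded modules of
chain maps. -/
def precomp (X : PureComplex 𝒜 δ) {q : Y →ₗ[𝒜.A] Y'} (hq : IsChainMap (c * t) Y Y' q)
    (hs : s' = s + t) : GHom (chainHomMod X Y' hc s') (chainHomMod X Y hc s) where
  lin :=
    { toFun := fun (f : chainMapSum c X Y') =>
        (⟨f.1 ∘ₗ q, comp_mem_chainMapSum f.2 hq.mem_chainMapSum⟩ : chainMapSum c X Y)
      map_add' := fun _ _ => rfl
      map_smul' := fun _ _ => rfl }
  grad j f hf := by
    induction hf using intShift_induction with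
    | zero _ => exact zero_mem _
    | mem n f hf =>
      have hfq := IsChainMap.comp hf hq
      rw [← mul_add] at hfq
      rw [hs, show (n : ℤ) + (s + t) = (n + t : ℕ) + s by push_cast; ring]
      exact (mem_chainHomMod_natCast_add hc).2 hfq

section precomp

variable {f : Y →ₗ[𝒜.A] P} {q : Y →ₗ[𝒜.A] Y'} {h : s' = s + t}

theorem precomp_injective (hq : IsChainMap (c * t) Y Y' q) (hsurj : Function.Surjective q) :
    Function.Injective (precomp hc X hq h).lin := fun _ _ hfg =>
  Subtype.ext ((LinearMap.cancel_right hsurj).1 (congrArg Subtype.val hfg))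

theorem range_precomp_cokernelπ (hf : IsChainMap (c * t) Y P f) :
    LinearMap.range (precomp hc X (t := 0) (isChainMap_cokernelπ hf) (add_zero s').symm).lin =
      LinearMap.ker (precomp hc X hf h).lin := by
  refine le_antisymm ?_ (GHom.ker_le_of_homogeneous _ fun j g hg hgf => ?_)
  · rintro _ ⟨g, rfl⟩
    refine Subtype.ext (LinearMap.ext fun y => ?_)
    exact (congrArg g.1 (cokernelπ_apply_apply hf y)).trans (map_zero g.1)
  · induction hg using intShift_induction with
    | zero _ => exact zero_mem _
    | mem n g hg =>
      have hle : LinearMap.range f ≤ LinearMap.ker g.1 :=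
        LinearMap.range_le_ker_iff.2 (congrArg Subtype.val hgf)
      have hlift : IsChainMap (c * n) (cokernel hf) X ((LinearMap.range f).liftQ g.1 hle) := by
        refine ⟨?_, ?_, fun y => ?_⟩
        · rintro l hl _ ⟨v, hv, rfl⟩
          exact hg.eq_zero_of_lt l hl v hv
        · rintro l _ ⟨v, hv, rfl⟩
          exact hg.map_mem_gen l v hv
        · obtain ⟨z, rfl⟩ := cokernelπ_surjective hf y
          exact hg.map_diff z
      exact ⟨⟨_, hlift.mem_chainMapSum⟩, Subtype.ext (LinearMap.ext fun _ => rfl)⟩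

theorem precomp_surjective [IsSemisimpleRing (ZeroRing 𝒜)] (hs : IsJumpPeriod δ c)
    (hX : X.ExactFrom 0) (hf : IsCover (c * t) X f) (hY : Y.ExactFrom (c * t + 1))
    (hlt : ∀ n < t, Y.gen (c * n) = ⊥) :
    Function.Surjective (precomp hc X hf.isChainMap h).lin := by
  refine GHom.surjective_of_homogeneous _ fun j g hg => ?_
  induction hg using intShift_induction with
  | zero _ => exact ⟨0, map_zero _⟩
  | mem m g hg =>
    rcases lt_or_ge m t with hmt | hmt
    · refine ⟨0, (map_zero _).trans (Subtype.ext (IsChainMap.eq_zero_of_head_eq_zero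
        hs.strictMono hX hg fun v hv => ?_).symm)⟩
      rw [hlt m hmt, Submodule.mem_bot] at hv
      rw [hv, map_zero]
    obtain ⟨n, rfl⟩ := Nat.exists_eq_add_of_le' hmt
    have hg' : IsChainMap (c * n + c * t) Y X g.1 := by rw [← mul_add]; exact hg
    obtain ⟨r, hr, hrf⟩ := hf.isChainMap.exists_retraction hs.strictMono hY
      hf.eq_zero_of_map_eq_zero
    obtain ⟨e, he, he₀⟩ := exists_isChainMap (Y := P) (hs.mul n) hX
      ((g.1 ∘ₗ r).restrictScalars (ZeroRing 𝒜) ∘ₗ (P.gen (c * n)).subtype) fun v =>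
        hg'.map_mem_gen 0 _ (by rw [zero_add]; exact hr _ _ v.2)
    refine ⟨⟨e, he.mem_chainMapSum⟩, Subtype.ext ?_⟩
    refine (he.comp hf.isChainMap).eq_of_head_eq hs.strictMono hX hg' fun v hv => ?_
    refine (he₀ ⟨f v, hf.isChainMap.map_mem_gen _ v hv⟩).trans ?_
    exact congrArg g.1 (hrf _ v hv)

end precomp

theorem IsCover.cokernel_gen_zero {f : Y →ₗ[𝒜.A] P} {n : ℕ} (hf : IsCover n X f) :
    (cokernel hf.isChainMap).gen 0 = ⊥ := by
  refine (Submodule.eq_bot_iff _).2 ?_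
  rintro _ ⟨w, hw, rfl⟩
  obtain ⟨v, -, hv⟩ := hf.exists_map_eq w hw
  exact (cokernelπ_eq_zero hf.isChainMap).2 ⟨v, hv⟩

theorem isKoszulMod_chainHomMod [IsSemisimpleRing (ZeroRing 𝒜)] (hs : IsJumpPeriod δ c)
    (hX : X.ExactFrom 0) (E : X.gen 0 ≃ₗ[ZeroRing 𝒜] ZeroRing 𝒜) (hY : Y.ExactFrom 1) :
    (chainEndAlg X hc).IsKoszulMod (chainHomMod X Y hc 0) := by
  refine isKoszulMod_of_forall_exists_isGradedSyzygy
    (fun n N => ∃ (Y : PureComplex 𝒜 δ) (t : ℕ) (s : ℤ), (n : ℤ) = s + t ∧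
      N = chainHomMod X Y hc s ∧ Y.ExactFrom (c * t + 1) ∧ ∀ m < t, Y.gen (c * m) = ⊥) ?_
    ⟨Y, 0, 0, rfl, rfl, hY, fun _ h => absurd h (Nat.not_lt_zero _)⟩
  rintro n _ ⟨Y, t, s, hn, rfl, hY, hlt⟩
  obtain ⟨P, f, hf⟩ := exists_isCover (hs.mul t) hX E Y
  have hK : (cokernel hf.isChainMap).ExactFrom 2 := cokernel_exactFrom (hs.mul t) hY
    (hf.exactFrom.mono (Nat.zero_le _)) hf.isChainMap hf.eq_zero_of_map_eq_zero
  refine ⟨_, _, precomp hc X hf.isChainMap hn,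
    precomp hc X (t := 0) (isChainMap_cokernelπ hf.isChainMap) (add_zero _).symm,
    ⟨hf.isRetractOfPower.hasDualBasis hc, precomp_surjective hc hs hX hf hY hlt,
      precomp_injective hc _ (cokernelπ_surjective _), range_precomp_cokernelπ hc _⟩,
    _, 1, n, Nat.cast_succ n, rfl, hK.mono (by omega), fun m hm => ?_⟩
  rw [Nat.lt_one_iff.1 hm, mul_zero]
  exact hf.cokernel_gen_zero

end PureComplex

/-! ### Koszulity of modules of chain maps -/

namespace GMod

variable {T : 𝒜.GMod}

theorem mem_grading_zero (hT : ∀ j ≠ 0, T.grading j = ⊥) (x : T.M) : x ∈ T.grading 0 := by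
  refine mem_of_proj_mem (Q := (T.grading 0).toAddSubgroup) fun j => ?_
  rcases eq_or_ne j 0 with rfl | hj
  · exact proj_mem 0 x
  · rw [(Submodule.mem_bot F).1 ((hT j hj).le (proj_mem j x))]
    exact zero_mem _

theorem smul_eq_zero_of_mem_jideal (hT : ∀ j ≠ 0, T.grading j = ⊥) {a : 𝒜.A} (ha : a ∈ 𝒜.jideal)
    (x : T.M) : a • x = 0 := by
  classical
  rw [← DirectSum.sum_support_decompose 𝒜.grading a, Finset.sum_smul]
  refine Finset.sum_eq_zero fun i _ => ?_
  rcases eq_or_ne i 0 with rfl | hi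
  · rw [mem_jideal_iff.1 ha, zero_smul]
  · have hix := T.smul_mem (SetLike.coe_mem (DirectSum.decompose 𝒜.grading a i))
      (mem_grading_zero hT x)
    rwa [hT _ (by simpa using hi)] at hix

theorem isTrivialGMod_of_generator (hT : ∀ j ≠ 0, T.grading j = ⊥) {t : T.M}
    (hgen : ∀ x, ∃ a : 𝒜.A, a • t = x) (hinj : ∀ a ∈ 𝒜.grading 0, a • t = 0 → a = 0) :
    IsTrivialGMod T := by
  let β := LinearMap.toSpanSingleton 𝒜.A T.M t
  have hker : LinearMap.ker β = 𝒜.jideal := by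
    refine le_antisymm (fun a ha => ?_) fun a ha => smul_eq_zero_of_mem_jideal hT ha t
    let a₀ : 𝒜.A := DirectSum.decompose 𝒜.grading a 0
    have hJ : a - a₀ ∈ 𝒜.jideal := sub_decompose_zero_mem_jideal a
    have ha₀ : a₀ = 0 := hinj a₀ (SetLike.coe_mem _) <| by
      have h := smul_eq_zero_of_mem_jideal hT hJ t
      rwa [sub_smul, show a • t = 0 from ha, zero_sub, neg_eq_zero] at h
    rwa [ha₀, sub_zero] at hJ
  exact ⟨hT, ⟨((Submodule.quotEquivOfEq _ _ hker).symm.trans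
    (β.quotKerEquivOfSurjective hgen)).symm⟩⟩

end GMod

namespace PureComplex

variable {δ : ℕ → ℕ} {X : PureComplex 𝒜 δ} {c : ℕ}

/-- The complex with `A` in homological degree `0` and no other terms. -/
def unit (𝒜 : GradedAlg F) (δ : ℕ → ℕ) : PureComplex 𝒜 δ where
  carrier := 𝒜.A
  gen
    | 0 => Submodule.span (ZeroRing 𝒜) {1}
    | _ + 1 => ⊥
  gen_fg
    | 0 => Submodule.fg_span_singleton 1
    | _ + 1 => Submodule.fg_bot
  span_gen := by
    refine (Ideal.eq_top_iff_one _).2 (Submodule.subset_span (Set.mem_iUnion.2 ⟨0, ?_⟩))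
    exact Submodule.mem_span_singleton_self 1
  exists_extend Z _ _ u := by
    refine ⟨LinearMap.toSpanSingleton 𝒜.A Z (u 0 ⟨1, Submodule.mem_span_singleton_self 1⟩), ?_⟩
    rintro (_ | n) ⟨v, hv⟩
    · obtain ⟨a, rfl⟩ := Submodule.mem_span_singleton.1 hv
      refine Eq.trans ?_ (map_smul (u 0) a ⟨1, Submodule.mem_span_singleton_self 1⟩).symm
      exact smul_assoc a (1 : 𝒜.A) _ |>.trans (by rw [one_smul])
    · obtain rfl := (Submodule.mem_bot _).1 hv
      exact (map_zero _).trans (map_zero (u (n + 1))).symm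
  diff := 0
  diff_gen_zero _ _ := rfl
  diff_gen_succ _ _ _ := zero_mem _
  diff_diff _ := rfl

theorem unit_gen_succ (n : ℕ) : (unit 𝒜 δ).gen (n + 1) = ⊥ := rfl

theorem one_mem_unit_gen_zero : (1 : 𝒜.A) ∈ (unit 𝒜 δ).gen 0 := Submodule.mem_span_singleton_self 1

theorem exists_smul_one_eq_of_mem_unit_gen_zero {v : unit 𝒜 δ} (hv : v ∈ (unit 𝒜 δ).gen 0) :
    ∃ a : ZeroRing 𝒜, a • (1 : 𝒜.A) = v :=
  Submodule.mem_span_singleton.1 hv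

theorem unit_exactFrom_one : (unit 𝒜 δ).ExactFrom 1 := by
  rintro (_ | n) hn j - x hx -
  · omega
  refine ⟨0, zero_mem _, ?_⟩
  rw [map_zero]
  exact (map_eq_zero_of_mem_gradedSpan (f := LinearMap.id (M := unit 𝒜 δ)) (V := ⊥)
    (fun v hv => (Submodule.mem_bot _).1 hv) hx).symm

theorem isChainMap_toSpanSingleton {x : X} (hx : x ∈ X.gen 0) :
    IsChainMap 0 (unit 𝒜 δ) X (LinearMap.toSpanSingleton 𝒜.A X x) := by
  refine .of_shift_zero ?_ fun (a : 𝒜.A) => ?_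
  · rintro (_ | n) v hv
    · obtain ⟨a, rfl⟩ := exists_smul_one_eq_of_mem_unit_gen_zero hv
      change (a • (1 : 𝒜.A)) • x ∈ X.gen 0
      rw [smul_assoc, one_smul]
      exact Submodule.smul_mem _ a hx
    · rw [unit_gen_succ, Submodule.mem_bot] at hv
      subst hv
      change (0 : 𝒜.A) • x ∈ X.gen (n + 1)
      rw [zero_smul]
      exact zero_mem _
  · change (0 : 𝒜.A) • x = X.diff (a • x)
    rw [map_smul, X.diff_gen_zero x hx, smul_zero, zero_smul]

theorem chainHomMod_unit_grading (hc : 0 < c) (hδ : StrictMono δ) (hX : X.ExactFrom 0) (j : ℤ)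
    (hj : j ≠ 0) : (chainHomMod X (unit 𝒜 δ) hc 0).grading j = ⊥ := by
  refine (Submodule.eq_bot_iff _).2 fun g hg => ?_
  induction hg using intShift_induction with
  | zero _ => rfl
  | mem n g hg =>
    obtain ⟨m, hm⟩ := Nat.exists_eq_succ_of_ne_zero
      (Nat.mul_ne_zero hc.ne' fun h : n = 0 => hj (by simp [h]))
    refine Subtype.ext (IsChainMap.eq_zero_of_head_eq_zero hδ hX hg fun v hv => ?_)
    rw [hm, unit_gen_succ, Submodule.mem_bot] at hv
    rw [hv, map_zero]

theorem isTrivialGMod_chainHomMod_unit (hc : 0 < c) (hs : IsJumpPeriod δ c) (hX : X.ExactFrom 0)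
    (E : X.gen 0 ≃ₗ[ZeroRing 𝒜] ZeroRing 𝒜) :
    IsTrivialGMod (chainHomMod X (unit 𝒜 δ) hc 0) := by
  have hT := chainHomMod_unit_grading hc hs.strictMono hX
  let x : X := E.symm 1
  have hx : x ∈ X.gen 0 := (E.symm 1).2
  have hE : ∀ v : X.gen 0, E v • x = v := fun v => congrArg Subtype.val <|
    show E v • E.symm 1 = v by rw [← map_smul, smul_eq_mul, mul_one, E.symm_apply_apply]
  refine GMod.isTrivialGMod_of_generator hT
    (t := ⟨_, (isChainMap_toSpanSingleton hx).mem_chainMapSum (n := 0)⟩) (fun g => ?_)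
    fun (b : chainEnd c X) hb hbx => ?_
  · have hg : IsChainMap 0 (unit 𝒜 δ) X g.1 :=
      (mem_chainHomMod_self hc).1 (GMod.mem_grading_zero hT g)
    have hy : g.1 (1 : 𝒜.A) ∈ X.gen 0 := hg.map_mem_gen 0 _ one_mem_unit_gen_zero
    obtain ⟨b, hb, hb₀⟩ := exists_isChainMap hs.zero hX
      (LinearMap.toSpanSingleton (ZeroRing 𝒜) X (g.1 (1 : 𝒜.A)) ∘ₗ E.toLinearMap)
      fun v => Submodule.smul_mem _ (E v) hy
    have hbx : b x = g.1 (1 : 𝒜.A) := (hb₀ (E.symm 1)).trans <| by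
      simp only [LinearMap.comp_apply, LinearEquiv.coe_coe, E.apply_symm_apply,
        LinearMap.toSpanSingleton_apply, one_smul]
    refine ⟨(⟨b, hb.mem_chainMapSum (n := 0)⟩ : chainEnd c X), Subtype.ext <|
      LinearMap.ext fun (a : 𝒜.A) => ?_⟩
    change b (a • x) = g.1 a
    rw [map_smul, hbx]
    exact (map_smul g.1 a _).symm.trans (congrArg g.1 (mul_one a))
  · have hbx' : b.1 x = 0 := by
      have := LinearMap.congr_fun (congrArg Subtype.val hbx) (1 : 𝒜.A)
      exact (congrArg b.1 (one_smul 𝒜.A x)).symm.trans this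
    refine Subtype.ext (IsChainMap.eq_zero_of_head_eq_zero hs.strictMono hX hb fun v hv => ?_)
    refine (congrArg b.1 (hE ⟨v, hv⟩).symm).trans ?_
    rw [Subring.smul_def, map_smul, hbx', smul_zero]

end PureComplex

/-! ### Graded projective covers and their uniqueness -/

namespace GMod

variable {P Q : 𝒜.GMod} {s : ℤ}

/-- The submodule of the elements whose components of degree less than `b` vanish. -/
def degreeGE (P : 𝒜.GMod) (b : ℤ) : Submodule 𝒜.A P.M where
  carrier := {x | ∀ j < b, P.proj j x = 0}
  add_mem' hx hy j hj := by rw [map_add, hx j hj, hy j hj, add_zero]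
  zero_mem' j _ := map_zero _
  smul_mem' a x hx := by
    induction a using DirectSum.Decomposition.inductionOn 𝒜.grading with
    | zero => intro j _; rw [zero_smul, map_zero]
    | add a b ha hb => intro j hj; rw [add_smul, map_add, ha j hj, hb j hj, add_zero]
    | @homogeneous i a =>
      intro j hj
      rw [proj_smul a.2 (add_sub_cancel (i : ℤ) j), hx _ (by omega), smul_zero]

theorem grading_eq_bot_of_degreeGE_eq_top {b j : ℤ} (h : P.degreeGE b = ⊤) (hj : j < b) :
    P.grading j = ⊥ := by
  refine (Submodule.eq_bot_iff _).2 fun x hx => ?_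
  rw [← proj_of_mem hx]
  exact h.ge (Submodule.mem_top (x := x)) j hj

theorem GenInDeg.grading_eq_bot (h : P.GenInDeg s) {j : ℤ} (hj : j < s) : P.grading j = ⊥ := by
  refine grading_eq_bot_of_degreeGE_eq_top (top_le_iff.1 (h.ge.trans (Submodule.span_le.2 ?_))) hj
  exact fun x hx l hl => proj_of_mem_ne hx hl.ne'

theorem exists_mem_degreeGE (x : P.M) : ∃ n : ℕ, x ∈ P.degreeGE (-n) := by
  classical
  obtain ⟨b, hb⟩ := (DirectSum.decompose P.grading x).support.bddBelow
  refine ⟨b.natAbs, fun j hj => by_contra fun hne => ?_⟩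
  have : b ≤ j := hb (DFinsupp.mem_support_iff.2 fun h => hne (congrArg Subtype.val h))
  omega

theorem exists_grading_eq_bot_of_lt [Module.Finite 𝒜.A P.M] :
    ∃ b : ℤ, ∀ j < b, P.grading j = ⊥ := by
  let N : ℕ →o Submodule 𝒜.A P.M :=
    ⟨fun n => P.degreeGE (-n), fun m n hmn x hx j hj => hx j (by omega)⟩
  have hN : iSup N = ⊤ := eq_top_iff.2 fun x _ => by
    obtain ⟨n, hn⟩ := exists_mem_degreeGE x
    exact Submodule.mem_iSup_of_mem n hn
  obtain ⟨n, hn⟩ := Module.Finite.fg_top.stabilizes_of_iSup_eq N hN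
  exact ⟨-n, fun j => grading_eq_bot_of_degreeGE_eq_top hn.symm⟩

theorem proj_mem_of_mem_jideal_smul_top {N : Submodule 𝒜.A P.M} {j : ℤ}
    (hN : ∀ l < j, ∀ x ∈ P.grading l, x ∈ N) {z : P.M}
    (hz : z ∈ 𝒜.jideal • (⊤ : Submodule 𝒜.A P.M)) : P.proj j z ∈ N := by
  classical
  induction hz using Submodule.smul_induction_on' with
  | add x _ y _ hx hy => rw [map_add]; exact add_mem hx hy
  | smul a ha w _ =>
    rw [← DirectSum.sum_support_decompose 𝒜.grading a, Finset.sum_smul, map_sum]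
    refine sum_mem fun i _ => ?_
    rcases eq_or_ne i 0 with rfl | hi
    · rw [mem_jideal_iff.1 ha, zero_smul, map_zero]
      exact zero_mem _
    · rw [proj_smul (SetLike.coe_mem _) (add_sub_cancel (i : ℤ) j)]
      exact N.smul_mem _ (hN _ (by omega) _ (proj_mem _ w))

theorem eq_top_of_sup_jideal_smul_top_eq_top [Module.Finite 𝒜.A P.M] {N : Submodule 𝒜.A P.M}
    (hN : ∀ j, ∀ x ∈ N, P.proj j x ∈ N)
    (h : N ⊔ 𝒜.jideal • (⊤ : Submodule 𝒜.A P.M) = ⊤) : N = ⊤ := by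
  obtain ⟨b, hb⟩ := exists_grading_eq_bot_of_lt (P := P)
  have key : ∀ n : ℕ, ∀ j < b + n, ∀ x ∈ P.grading j, x ∈ N := by
    intro n
    induction n with
    | zero =>
      intro j hj x hx
      rw [hb j (by omega), Submodule.mem_bot] at hx
      exact hx ▸ zero_mem N
    | succ n ih =>
      intro j hj x hx
      obtain ⟨y, hy, z, hz, rfl⟩ := Submodule.mem_sup.1 (h.ge (Submodule.mem_top (x := x)))
      rw [← proj_of_mem hx, map_add]
      exact add_mem (hN j y hy)
        (proj_mem_of_mem_jideal_smul_top (fun l hl => ih l (by push_cast at hj; omega)) hz)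
  exact eq_top_iff.2 fun x _ => mem_of_proj_mem (Q := N.toAddSubgroup) fun j =>
    key (j - b + 1).toNat j (by omega) _ (proj_mem j x)

theorem exists_gHom_eq_proj (f : P.M →ₗ[𝒜.A] Q.M) :
    ∃ g : GHom P Q, ∀ j, ∀ x ∈ P.grading j, g.lin x = Q.proj j (f x) := by
  let ψ : P.M →ₗ[F] Q.M := DirectSum.toModule F ℤ Q.M
    (fun j => Q.proj j ∘ₗ f.restrictScalars F ∘ₗ (P.grading j).subtype) ∘ₗ
      (DirectSum.decomposeLinearEquiv P.grading).toLinearMap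
  have hψ : ∀ j, ∀ x ∈ P.grading j, ψ x = Q.proj j (f x) := fun j x hx => by
    change DirectSum.toModule F ℤ Q.M _ (DirectSum.decompose P.grading x) = _
    rw [DirectSum.decompose_of_mem _ hx]
    exact DirectSum.toModule_lof F j _
  refine ⟨⟨{ ψ with map_smul' := fun a x => ?_ }, fun j x hx => ?_⟩, hψ⟩
  · change ψ (a • x) = a • ψ x
    induction x using GMod.induction_on with
    | zero => simp only [smul_zero, map_zero]
    | add x y hx hy => simp only [smul_add, map_add, hx, hy]
    | mem j x hx =>
      induction a using DirectSum.Decomposition.inductionOn 𝒜.grading with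
      | zero => simp only [zero_smul, map_zero]
      | add a b ha hb => simp only [add_smul, map_add, ha, hb]
      | homogeneous a =>
        rw [hψ _ _ hx, hψ _ _ (P.smul_mem a.2 hx), map_smul, proj_smul a.2 rfl]
  · exact (hψ j x hx).symm ▸ proj_mem j (f x)

theorem GenInDeg.of_surjective (h : P.GenInDeg s) (f : GHom P Q)
    (hf : Function.Surjective f.lin) : Q.GenInDeg s := by
  rw [GenInDeg, ← top_le_iff, ← LinearMap.range_eq_top.2 hf, LinearMap.range_eq_map, ← h,
    Submodule.map_span]
  refine Submodule.span_mono ?_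
  rintro _ ⟨v, hv, rfl⟩
  exact f.grad s v hv

end GMod

namespace GHom

variable {P P' Q : 𝒜.GMod}

/-- The composite of two morphisms of graded modules. -/
def comp {M₁ M₂ M₃ : 𝒜.GMod} (g : GHom M₂ M₃) (f : GHom M₁ M₂) : GHom M₁ M₃ :=
  ⟨g.lin ∘ₗ f.lin, fun j x hx => g.grad j _ (f.grad j x hx)⟩

theorem exists_mem_grading_map_eq (f : GHom P Q) {j : ℤ} {y : Q.M} (hy : y ∈ Q.grading j)
    (h : y ∈ LinearMap.range f.lin) : ∃ x ∈ P.grading j, f.lin x = y := by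
  obtain ⟨x, rfl⟩ := h
  exact ⟨P.proj j x, GMod.proj_mem j x, by rw [f.map_proj, GMod.proj_of_mem hy]⟩

theorem exists_lift [Module.Projective 𝒜.A P'.M] (f : GHom P Q) (f' : GHom P' Q)
    (h : LinearMap.range f'.lin ≤ LinearMap.range f.lin) :
    ∃ w : GHom P' P, ∀ x, f.lin (w.lin x) = f'.lin x := by
  obtain ⟨u, hu⟩ := Module.projective_lifting_property f.lin.rangeRestrict
    (f'.lin.codRestrict (LinearMap.range f.lin) fun x => h ⟨x, rfl⟩)
    f.lin.surjective_rangeRestrict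
  have hfu : ∀ x, f.lin (u x) = f'.lin x := fun x => congrArg Subtype.val (LinearMap.congr_fun hu x)
  obtain ⟨w, hw⟩ := GMod.exists_gHom_eq_proj u
  refine ⟨w, fun x => ?_⟩
  induction x using GMod.induction_on with
  | zero => simp only [map_zero]
  | add x y hx hy => simp only [map_add, hx, hy]
  | mem j x hx => rw [hw j x hx, f.map_proj, hfu, GMod.proj_of_mem (f'.grad j x hx)]

/-- `f : P → Q` is a projective cover of its range. -/
structure IsProjectiveCover (f : GHom P Q) : Prop where
  finite : Module.Finite 𝒜.A P.M
  projective : Module.Projective 𝒜.A P.M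
  ker_le : LinearMap.ker f.lin ≤ 𝒜.jideal • (⊤ : Submodule 𝒜.A P.M)

namespace IsProjectiveCover

variable {f : GHom P Q} {f' : GHom P' Q} {w : GHom P' P}

theorem surjective_lift (hf : f.IsProjectiveCover)
    (h : LinearMap.range f.lin ≤ LinearMap.range f'.lin)
    (hw : ∀ x, f.lin (w.lin x) = f'.lin x) : Function.Surjective w.lin := by
  have := hf.finite
  refine LinearMap.range_eq_top.1 (GMod.eq_top_of_sup_jideal_smul_top_eq_top ?_ ?_)
  · rintro j _ ⟨x, rfl⟩
    exact ⟨P'.proj j x, w.map_proj j x⟩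
  · refine eq_top_iff.2 fun x _ => ?_
    obtain ⟨y, hy⟩ := h ⟨x, rfl⟩
    refine Submodule.mem_sup.2 ⟨w.lin y, ⟨y, rfl⟩, x - w.lin y, hf.ker_le ?_, by abel⟩
    rw [LinearMap.mem_ker, map_sub, hw, hy, sub_self]

theorem bijective_lift (hf : f.IsProjectiveCover) (hf' : f'.IsProjectiveCover)
    (h : LinearMap.range f.lin = LinearMap.range f'.lin)
    (hw : ∀ x, f.lin (w.lin x) = f'.lin x) : Function.Bijective w.lin := by
  have hsurj := hf.surjective_lift h.le hw
  have := hf.projective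
  obtain ⟨σ, hσ⟩ := w.exists_lift ⟨LinearMap.id, fun _ _ hx => hx⟩
    (le_top.trans (LinearMap.range_eq_top.2 hsurj).ge)
  have hσ_surj : Function.Surjective σ.lin :=
    hf'.surjective_lift h.ge fun x => by rw [← hw, hσ]; rfl
  exact ⟨(Function.RightInverse.leftInverse_of_surjective hσ hσ_surj).injective, hsurj⟩

theorem exists_bijective_map_ker_eq (hf : f.IsProjectiveCover) (hf' : f'.IsProjectiveCover)
    (h : LinearMap.range f.lin = LinearMap.range f'.lin) :
    ∃ w : GHom P' P, Function.Bijective w.lin ∧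
      (LinearMap.ker f'.lin).map w.lin = LinearMap.ker f.lin := by
  have := hf'.projective
  obtain ⟨w, hw⟩ := f.exists_lift f' h.ge
  have hbij := hf.bijective_lift hf' h hw
  have hcomp : f'.lin = f.lin ∘ₗ w.lin := LinearMap.ext fun x => (hw x).symm
  exact ⟨w, hbij, by
    rw [hcomp, LinearMap.ker_comp, Submodule.map_comap_eq_of_surjective hbij.2]⟩

end IsProjectiveCover

end GHom

namespace MinRes

variable {M : 𝒜.GMod}

theorem diff_diff (R : MinRes M) (n : ℕ) (x : (R.P (n + 2)).M) :
    (R.d n).lin ((R.d (n + 1)).lin x) = 0 :=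
  (R.exact n).le ⟨x, rfl⟩

theorem isProjectiveCover_aug (R : MinRes M) : R.aug.IsProjectiveCover :=
  ⟨R.fg 0, R.projective 0, R.exact_aug ▸ R.minimal 0⟩

theorem isProjectiveCover_d (R : MinRes M) (n : ℕ) : (R.d n).IsProjectiveCover :=
  ⟨R.fg _, R.projective _, R.exact n ▸ R.minimal (n + 1)⟩

theorem exists_bijective (R R' : MinRes M) (n : ℕ) :
    ∃ w : GHom (R'.P n) (R.P n), Function.Bijective w.lin ∧
      (LinearMap.range (R'.d n).lin).map w.lin = LinearMap.range (R.d n).lin := by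
  induction n with
  | zero =>
    rw [R.exact_aug, R'.exact_aug]
    refine R.isProjectiveCover_aug.exists_bijective_map_ker_eq R'.isProjectiveCover_aug ?_
    rw [LinearMap.range_eq_top.2 R.aug_surj, LinearMap.range_eq_top.2 R'.aug_surj]
  | succ n ih =>
    obtain ⟨w, hw, hrange⟩ := ih
    have hker : LinearMap.ker (w.comp (R'.d n)).lin = LinearMap.ker (R'.d n).lin :=
      LinearMap.ker_comp_of_ker_eq_bot _ (LinearMap.ker_eq_bot.2 hw.1)
    have hcover : (w.comp (R'.d n)).IsProjectiveCover :=
      ⟨R'.fg _, R'.projective _, hker ▸ (R'.isProjectiveCover_d n).ker_le⟩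
    rw [R.exact, R'.exact, ← hker]
    refine (R.isProjectiveCover_d n).exists_bijective_map_ker_eq hcover ?_
    exact hrange.symm.trans (LinearMap.range_comp _ _).symm

theorem genInDeg_of_genInDeg (R R' : MinRes M) {n : ℕ} {s : ℤ} (h : (R'.P n).GenInDeg s) :
    (R.P n).GenInDeg s := by
  obtain ⟨w, hw, -⟩ := R.exists_bijective R' n
  exact h.of_surjective w hw.2

end MinRes

/-! ### Projective modules generated in one degree -/

namespace GMod

/-- The regular module, with its generator `1` placed in degree `s`. -/
def regular (𝒜 : GradedAlg F) (s : ℤ) : 𝒜.GMod where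
  M := 𝒜.A
  grading := intShift 𝒜.grading s
  sup_eq_top := (iSup_extend_bot (natCast_add_injective s) _).trans
    (DirectSum.Decomposition.isInternal 𝒜.grading).submodule_iSup_eq_top
  indep := iSupIndep_extend_bot
    (DirectSum.Decomposition.isInternal 𝒜.grading).submodule_iSupIndep (natCast_add_injective s)
  smul_mem {i j a x} ha hx := by
    induction hx using intShift_induction with
    | zero j => rw [smul_zero]; exact zero_mem _
    | mem n x hx =>
      rw [← add_assoc, ← Nat.cast_add]
      exact intShift_natCast_add.ge (SetLike.mul_mem_graded ha hx)

/-- `P_s`, as an `A_0`-module. -/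
def part (P : 𝒜.GMod) (s : ℤ) : Submodule (ZeroRing 𝒜) P.M where
  __ := (P.grading s).toAddSubmonoid
  smul_mem' a x hx := by
    have h := P.smul_mem a.2 hx
    rwa [Nat.cast_zero, zero_add] at h

variable {P : 𝒜.GMod}

theorem smul_mem_natCast {s i j : ℕ} (h : s + i = j) {a : 𝒜.A} (ha : a ∈ 𝒜.grading i) {x : P.M}
    (hx : x ∈ P.grading s) : a • x ∈ P.grading j := by
  rw [← h, add_comm, Nat.cast_add]
  exact P.smul_mem ha hx

theorem gradedSpan_part_le {s j : ℕ} : gradedSpan (P.part s) s j ≤ P.part j := by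
  refine Submodule.span_le.2 ?_
  rintro _ ⟨i, hi, a, ha, v, hv, rfl⟩
  exact smul_mem_natCast hi ha hv

theorem GenInDeg.eq_zero_of_mem_jideal_smul_top {s : ℤ} (h : P.GenInDeg s) {x : P.M}
    (hx : x ∈ P.grading s) (hJ : x ∈ 𝒜.jideal • (⊤ : Submodule 𝒜.A P.M)) : x = 0 := by
  rw [← proj_of_mem hx]
  exact proj_mem_of_mem_jideal_smul_top (N := ⊥) (fun l hl y hy => (h.grading_eq_bot hl).le hy) hJ

/-- The morphism from the regular module that sends `1` to `x`. -/
def regularToSpanSingleton {s : ℤ} {x : P.M} (hx : x ∈ P.grading s) : GHom (regular 𝒜 s) P where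
  lin := LinearMap.toSpanSingleton 𝒜.A P.M x
  grad j a ha := by
    induction ha using intShift_induction with
    | zero j =>
      change (0 : 𝒜.A) • x ∈ P.grading j
      rw [zero_smul]
      exact zero_mem _
    | mem n a ha => exact P.smul_mem ha hx

theorem GenInDeg.hasDualBasis [Module.Finite 𝒜.A P.M] [Module.Projective 𝒜.A P.M] {s : ℤ}
    (h : P.GenInDeg s) : P.HasDualBasis s := by
  obtain ⟨t, ht, hspan⟩ := (Submodule.fg_span_iff_fg_span_finset_subset _).1
    (h.symm ▸ Module.Finite.fg_top)
  let e (k : Fin t.card) : P.M := t.equivFin.symm k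
  have he (k : Fin t.card) : e k ∈ P.grading s := ht (t.equivFin.symm k).2
  let π := Fintype.linearCombination 𝒜.A e
  have hπ : Function.Surjective π := by
    have hrange : Set.range e = t :=
      (t.equivFin.symm.surjective.range_comp _).trans Subtype.range_coe
    rw [← LinearMap.range_eq_top, Fintype.range_linearCombination, hrange, ← hspan, h]
  obtain ⟨σ, hσ⟩ := Module.projective_lifting_property π LinearMap.id hπ
  choose β hβ using fun k => exists_gHom_eq_proj (Q := regular 𝒜 s) (LinearMap.proj k ∘ₗ σ)
  let φ : P.M →ₗ[𝒜.A] (Fin t.card → 𝒜.A) := LinearMap.pi fun k => (β k).lin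
  refine ⟨_, e, φ, he,
    fun n x hx k => intShift_natCast_add.le ((β k).grad _ x hx), fun x => ?_⟩
  induction x using GMod.induction_on with
  | zero => simp only [map_zero, Pi.zero_apply, zero_smul, Finset.sum_const_zero]
  | add x y hx hy => simp only [map_add, Pi.add_apply, add_smul, Finset.sum_add_distrib, hx, hy]
  | mem j x hx =>
    let α (k : Fin t.card) : GHom (regular 𝒜 s) P := regularToSpanSingleton (he k)
    calc ∑ k, φ x k • e k
        = ∑ k, (α k).lin ((regular 𝒜 s).proj j (σ x k : 𝒜.A)) :=
          Finset.sum_congr rfl fun k _ => congrArg (α k).lin (hβ k j x hx)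
      _ = ∑ k, P.proj j ((α k).lin (σ x k : 𝒜.A)) :=
          Finset.sum_congr rfl fun k _ => (α k).map_proj j _
      _ = P.proj j (π (σ x)) := (map_sum (P.proj j) _ _).symm
      _ = x := by rw [← LinearMap.comp_apply, hσ, LinearMap.id_apply, proj_of_mem hx]

namespace HasDualBasis

variable {s : ℤ}

theorem exists_sum_part_smul_eq (h : P.HasDualBasis s) :
    ∃ (m : ℕ) (e : Fin m → P.part s) (φ : P.M →ₗ[𝒜.A] (Fin m → 𝒜.A)),
      (∀ x ∈ P.part s, ∀ k, φ x k ∈ 𝒜.grading 0) ∧ ∀ x, ∑ k, φ x k • (e k : P.M) = x := by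
  obtain ⟨m, e, φ, he, hgr, hφ⟩ := h
  exact ⟨m, fun k => ⟨e k, he k⟩, φ,
    fun x hx => hgr 0 x (by rwa [Nat.cast_zero, zero_add]), hφ⟩

theorem part_fg (h : P.HasDualBasis s) : (P.part s).FG := by
  obtain ⟨m, e, φ, hφ₀, hφ⟩ := h.exists_sum_part_smul_eq
  refine Submodule.fg_def.2 ⟨Set.range fun k => (e k : P.M), Set.finite_range _,
    le_antisymm (Submodule.span_le.2 ?_) fun x hx => ?_⟩
  · rintro _ ⟨k, rfl⟩
    exact (e k).2
  · rw [← hφ x]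
    exact sum_mem fun k _ => Submodule.smul_mem _ (⟨φ x k, hφ₀ x hx k⟩ : ZeroRing 𝒜)
      (Submodule.subset_span ⟨k, rfl⟩)

theorem exists_extend (h : P.HasDualBasis s) {Z : Type*} [AddCommGroup Z] [Module 𝒜.A Z]
    (u : P.part s →ₗ[ZeroRing 𝒜] Z) : ∃ f : P.M →ₗ[𝒜.A] Z, ∀ v : P.part s, f v = u v := by
  obtain ⟨m, e, φ, hφ₀, hφ⟩ := h.exists_sum_part_smul_eq
  refine ⟨Fintype.linearCombination 𝒜.A (fun k => u (e k)) ∘ₗ φ, fun v => ?_⟩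
  let r (k : Fin m) : ZeroRing 𝒜 := ⟨φ v k, hφ₀ v v.2 k⟩
  calc ∑ k, φ v k • u (e k) = u (∑ k, r k • e k) := by simp only [map_sum, map_smul]; rfl
    _ = u v := congrArg u (Subtype.ext ((Submodule.coe_sum _ _ _).trans (hφ v)))

theorem mem_gradedSpan_part {s : ℕ} (h : P.HasDualBasis s) {j : ℕ} {x : P.M}
    (hx : x ∈ P.grading j) : x ∈ gradedSpan (P.part s) s j := by
  rcases lt_or_ge j s with hj | hj
  · rw [h.genInDeg.grading_eq_bot (Nat.cast_lt.2 hj), Submodule.mem_bot] at hx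
    exact hx ▸ zero_mem _
  · obtain ⟨m, e, φ, he, hgr, hφ⟩ := h
    obtain ⟨i, rfl⟩ := Nat.exists_eq_add_of_le hj
    rw [← hφ x]
    exact sum_mem fun k _ => smul_mem_gradedSpan rfl
      (hgr i x (by rwa [add_comm, ← Nat.cast_add]) k) (he k)

end HasDualBasis

end GMod

/-! ### The total complex of a minimal resolution -/

namespace MinRes

variable {M : 𝒜.GMod} {δ : ℕ → ℕ}

section Total

open DirectSum

variable (R : MinRes M)

/-- The total module of a resolution. -/
abbrev Total : Type := ⨁ n, (R.P n).M

/-- The inclusion of the `n`-th term into the total module. -/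
abbrev totalIncl (n : ℕ) : (R.P n).M →ₗ[𝒜.A] R.Total := lof 𝒜.A ℕ (fun n => (R.P n).M) n

/-- The total differential of a resolution. -/
def totalDiff : R.Total →ₗ[𝒜.A] R.Total :=
  toModule 𝒜.A ℕ R.Total fun
    | 0 => 0
    | n + 1 => R.totalIncl n ∘ₗ (R.d n).lin

theorem totalDiff_totalIncl_zero (x : (R.P 0).M) : R.totalDiff (R.totalIncl 0 x) = 0 :=
  toModule_lof ..

theorem totalDiff_totalIncl_succ (n : ℕ) (x : (R.P (n + 1)).M) :
    R.totalDiff (R.totalIncl (n + 1) x) = R.totalIncl n ((R.d n).lin x) :=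
  toModule_lof ..

theorem totalDiff_totalDiff (x : R.Total) : R.totalDiff (R.totalDiff x) = 0 := by
  induction x using DirectSum.induction_on with
  | zero => rw [map_zero, map_zero]
  | add x y hx hy => rw [map_add, map_add, hx, hy, add_zero]
  | of n x =>
    change R.totalDiff (R.totalDiff (R.totalIncl n x)) = 0
    match n, x with
    | 0, x => rw [totalDiff_totalIncl_zero, map_zero]
    | 1, x => rw [totalDiff_totalIncl_succ, totalDiff_totalIncl_zero]
    | n + 2, x => rw [totalDiff_totalIncl_succ, totalDiff_totalIncl_succ, R.diff_diff, map_zero]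

theorem span_iUnion_map_totalIncl_part (hR : ∀ n, (R.P n).GenInDeg (δ n)) :
    Submodule.span 𝒜.A (⋃ n, (((R.P n).part (δ n)).map
      ((R.totalIncl n).restrictScalars (ZeroRing 𝒜)) : Set R.Total)) = ⊤ := by
  refine eq_top_iff.2 fun x _ => ?_
  induction x using DirectSum.induction_on with
  | zero => exact zero_mem _
  | add x y hx hy => exact add_mem (hx trivial) (hy trivial)
  | of n x =>
    have hx : x ∈ Submodule.span 𝒜.A ((R.P n).grading (δ n) : Set (R.P n).M) :=
      (hR n).ge trivial
    have hlof := Submodule.mem_map_of_mem (f := R.totalIncl n) hx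
    rw [Submodule.map_span] at hlof
    exact Submodule.span_mono (Set.subset_iUnion_of_subset n le_rfl) hlof

end Total

theorem hasDualBasis (R : MinRes M) {n : ℕ} {s : ℤ} (h : (R.P n).GenInDeg s) :
    (R.P n).HasDualBasis s :=
  have := R.fg n
  have := R.projective n
  h.hasDualBasis

/-- A minimal resolution with `n`-th term generated in degree `δ n`, as a pure complex. -/
def toPureComplex (R : MinRes M) (hR : ∀ n, (R.P n).GenInDeg (δ n)) : PureComplex 𝒜 δ where
  carrier := R.Total
  gen n := ((R.P n).part (δ n)).map ((R.totalIncl n).restrictScalars (ZeroRing 𝒜))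
  gen_fg n := (R.hasDualBasis (hR n)).part_fg.map _
  span_gen := R.span_iUnion_map_totalIncl_part hR
  exists_extend Z _ _ u := by
    choose f hf using fun n => (R.hasDualBasis (hR n)).exists_extend (u n ∘ₗ
      ((R.totalIncl n).restrictScalars _).submoduleMap _)
    refine ⟨DirectSum.toModule 𝒜.A ℕ Z f, ?_⟩
    rintro n ⟨_, x, hx, rfl⟩
    exact (DirectSum.toModule_lof (φ := f) ..).trans (hf n ⟨x, hx⟩)
  diff := R.totalDiff
  diff_gen_zero := by
    rintro _ ⟨x, -, rfl⟩
    exact R.totalDiff_totalIncl_zero x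
  diff_gen_succ := by
    rintro n _ ⟨x, hx, rfl⟩
    change R.totalDiff (R.totalIncl (n + 1) x) ∈ _
    rw [totalDiff_totalIncl_succ]
    refine map_mem_gradedSpan_of_mapsTo (V := (R.P n).part (δ n)) _
      (fun _ => Submodule.mem_map_of_mem) rfl ?_
    exact (R.hasDualBasis (hR n)).mem_gradedSpan_part ((R.d n).grad _ x hx)
  diff_diff := R.totalDiff_totalDiff

section toPureComplex

variable (R : MinRes M) (hR : ∀ n, (R.P n).GenInDeg (δ n)) {n j : ℕ}

/-- The inclusion of the `n`-th term. -/
def incl (n : ℕ) : (R.P n).M →ₗ[𝒜.A] R.toPureComplex hR := R.totalIncl n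

/-- The projection onto the `n`-th term. -/
def component (n : ℕ) : R.toPureComplex hR →ₗ[𝒜.A] (R.P n).M :=
  DirectSum.component 𝒜.A ℕ (fun n => (R.P n).M) n

theorem component_incl (x : (R.P n).M) : R.component hR n (R.incl hR n x) = x :=
  DirectSum.component.lof_self (M := fun n => (R.P n).M) 𝒜.A n x

theorem component_incl_of_ne {m : ℕ} (h : n ≠ m) (x : (R.P m).M) :
    R.component hR n (R.incl hR m x) = 0 :=
  DirectSum.of_eq_of_ne (β := fun n => (R.P n).M) m n x h

theorem diff_incl_zero (x : (R.P 0).M) : (R.toPureComplex hR).diff (R.incl hR 0 x) = 0 :=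
  R.totalDiff_totalIncl_zero x

theorem diff_incl_succ (x : (R.P (n + 1)).M) :
    (R.toPureComplex hR).diff (R.incl hR (n + 1) x) = R.incl hR n ((R.d n).lin x) :=
  R.totalDiff_totalIncl_succ n x

theorem incl_injective : Function.Injective (R.incl hR n) :=
  Function.LeftInverse.injective fun x => R.component_incl hR x

theorem component_diff (y : R.toPureComplex hR) :
    R.component hR n ((R.toPureComplex hR).diff y) = (R.d n).lin (R.component hR (n + 1) y) := by
  suffices h : R.component hR n ∘ₗ (R.toPureComplex hR).diff =
      (R.d n).lin ∘ₗ R.component hR (n + 1) from LinearMap.congr_fun h y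
  refine DirectSum.linearMap_ext 𝒜.A fun m => LinearMap.ext fun x => ?_
  change R.component hR n ((R.toPureComplex hR).diff (R.incl hR m x)) =
    (R.d n).lin (R.component hR (n + 1) (R.incl hR m x))
  cases m with
  | zero =>
    rw [diff_incl_zero, component_incl_of_ne _ _ n.succ_ne_zero, map_zero, map_zero]
  | succ m =>
    rw [diff_incl_succ]
    rcases eq_or_ne n m with rfl | h
    · rw [component_incl, component_incl]
    · rw [component_incl_of_ne _ _ h, component_incl_of_ne _ _ (by omega), map_zero]

theorem incl_mem_gen {x : (R.P n).M} (hx : x ∈ (R.P n).grading (δ n)) :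
    R.incl hR n x ∈ (R.toPureComplex hR).gen n :=
  ⟨x, hx, rfl⟩

theorem exists_incl_eq_of_mem_gen {v : R.toPureComplex hR}
    (hv : v ∈ (R.toPureComplex hR).gen n) : ∃ x ∈ (R.P n).grading (δ n), R.incl hR n x = v :=
  hv

theorem incl_component_of_mem_gen {v : R.toPureComplex hR}
    (hv : v ∈ (R.toPureComplex hR).gen n) : R.incl hR n (R.component hR n v) = v := by
  obtain ⟨x, -, rfl⟩ := R.exists_incl_eq_of_mem_gen hR hv
  rw [component_incl]

theorem incl_mem_piece {x : (R.P n).M} (hx : x ∈ (R.P n).grading j) :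
    R.incl hR n x ∈ (R.toPureComplex hR).piece n j :=
  map_mem_gradedSpan_of_mapsTo (R.incl hR n) (fun _ => R.incl_mem_gen hR) rfl
    ((R.hasDualBasis (hR n)).mem_gradedSpan_part hx)

theorem exists_incl_eq_of_mem_piece {v : R.toPureComplex hR}
    (hv : v ∈ (R.toPureComplex hR).piece n j) : ∃ x ∈ (R.P n).grading j, R.incl hR n x = v := by
  obtain ⟨x, hx, rfl⟩ := exists_gradedSpan_map_eq (V := (R.P n).part (δ n))
    (fun w => R.exists_incl_eq_of_mem_gen hR) hv
  exact ⟨x, GMod.gradedSpan_part_le hx, rfl⟩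

theorem exists_mem_piece_diff_eq_incl {x : (R.P n).M} (hx : x ∈ (R.P n).grading j)
    (h : x ∈ LinearMap.range (R.d n).lin) :
    ∃ y ∈ (R.toPureComplex hR).piece (n + 1) j, (R.toPureComplex hR).diff y = R.incl hR n x := by
  obtain ⟨y, hy, rfl⟩ := (R.d n).exists_mem_grading_map_eq hx h
  exact ⟨_, R.incl_mem_piece hR hy, R.diff_incl_succ hR y⟩

theorem toPureComplex_exactFrom_one : (R.toPureComplex hR).ExactFrom 1 := by
  rintro (_ | n) hn j - v hv hd
  · omega
  · obtain ⟨x, hx, rfl⟩ := R.exists_incl_eq_of_mem_piece hR hv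
    rw [diff_incl_succ, map_eq_zero_iff _ (R.incl_injective hR)] at hd
    exact R.exists_mem_piece_diff_eq_incl hR hx ((R.exact n).ge hd)

theorem toPureComplex_exactFrom_zero (hM : ∀ j ≠ 0, M.grading j = ⊥) :
    (R.toPureComplex hR).ExactFrom 0 := by
  rintro (_ | n) - j hj v hv hd
  · obtain ⟨x, hx, rfl⟩ := R.exists_incl_eq_of_mem_piece hR hv
    refine R.exists_mem_piece_diff_eq_incl hR hx (R.exact_aug.ge ?_)
    have hxj := R.aug.grad j x hx
    have hj' := hj rfl
    rwa [hM j (by omega)] at hxj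
  · exact R.toPureComplex_exactFrom_one hR (n + 1) (by omega) j hj v hv hd

end toPureComplex

/-- The augmentation, as a map on the whole complex that vanishes on all terms but the first. -/
def augmentation (R : MinRes M) (hR : ∀ n, (R.P n).GenInDeg (δ n)) :
    R.toPureComplex hR →ₗ[𝒜.A] M.M :=
  R.aug.lin ∘ₗ R.component hR 0

variable {T : 𝒜.GMod}

theorem bijective_augmentation_gen_zero (R : MinRes T) (hR : ∀ n, (R.P n).GenInDeg (δ n))
    (hδ : δ 0 = 0) (hT : ∀ j ≠ 0, T.grading j = ⊥) :
    Function.Bijective ((R.augmentation hR).restrictScalars (ZeroRing 𝒜) ∘ₗ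
      ((R.toPureComplex hR).gen 0).subtype) := by
  refine ⟨(injective_iff_map_eq_zero _).2 ?_, fun t => ?_⟩
  · rintro ⟨v, hv⟩ hv0
    obtain ⟨x, hx, rfl⟩ := R.exists_incl_eq_of_mem_gen hR hv
    have hker : R.aug.lin x = 0 := by
      rw [← R.component_incl hR x]
      exact hv0
    refine Subtype.ext (map_eq_zero_iff _ (R.incl_injective hR) |>.2 ?_)
    exact (hR 0).eq_zero_of_mem_jideal_smul_top hx (R.minimal 0 (R.exact_aug.ge hker))
  · obtain ⟨x, hx, rfl⟩ := R.aug.exists_mem_grading_map_eq (GMod.mem_grading_zero hT t)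
      (R.aug_surj t)
    refine ⟨⟨_, R.incl_mem_gen hR (by rwa [hδ])⟩, ?_⟩
    exact congrArg R.aug.lin (R.component_incl hR x)

/-- The generators of the first term, identified with the resolved module. -/
def headEquiv (R : MinRes T) (hR : ∀ n, (R.P n).GenInDeg (δ n)) (hδ : δ 0 = 0)
    (hT : ∀ j ≠ 0, T.grading j = ⊥) : (R.toPureComplex hR).gen 0 ≃ₗ[ZeroRing 𝒜] T.M :=
  .ofBijective _ (R.bijective_augmentation_gen_zero hR hδ hT)

end MinRes

theorem nonempty_quotient_jideal_equiv (𝒜 : GradedAlg F) :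
    Nonempty ((𝒜.A ⧸ 𝒜.jideal) ≃ₗ[ZeroRing 𝒜] ZeroRing 𝒜) := by
  let f : ZeroRing 𝒜 →ₗ[ZeroRing 𝒜] 𝒜.A ⧸ 𝒜.jideal :=
    𝒜.jideal.mkQ.restrictScalars (ZeroRing 𝒜) ∘ₗ
      { toFun := Subtype.val, map_add' := fun _ _ => rfl, map_smul' := fun _ _ => rfl }
  refine ⟨(LinearEquiv.ofBijective f ⟨(injective_iff_map_eq_zero f).2 fun a ha => ?_,
    fun x => ?_⟩).symm⟩
  · have haJ : (a : 𝒜.A) ∈ 𝒜.jideal := (Submodule.Quotient.mk_eq_zero _).1 ha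
    rw [mem_jideal_iff, DirectSum.decompose_of_mem_same _ a.2] at haJ
    exact Subtype.ext haJ
  · obtain ⟨a, rfl⟩ := 𝒜.jideal.mkQ_surjective x
    exact ⟨DirectSum.decompose 𝒜.grading a 0,
      ((Submodule.Quotient.eq _).2 (sub_decompose_zero_mem_jideal a)).symm⟩

theorem MinRes.nonempty_gen_zero_equiv {T : 𝒜.GMod} {δ : ℕ → ℕ} (R : MinRes T)
    (hR : ∀ n, (R.P n).GenInDeg (δ n)) (hδ : δ 0 = 0) (hT : IsTrivialGMod T) :
    Nonempty ((R.toPureComplex hR).gen 0 ≃ₗ[ZeroRing 𝒜] ZeroRing 𝒜) := by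
  obtain ⟨hT₀, ⟨e⟩⟩ := hT
  obtain ⟨e'⟩ := nonempty_quotient_jideal_equiv 𝒜
  exact ⟨(R.headEquiv hR hδ hT₀).trans ((e.restrictScalars (ZeroRing 𝒜)).trans e')⟩

/-! ### Ext groups as spaces of chain maps -/

section TrivialCoefficients

variable {T M : 𝒜.GMod}

theorem GMod.map_eq_zero_of_mem_jideal_smul_top (hT : ∀ j ≠ 0, T.grading j = ⊥) {P : Type*}
    [AddCommGroup P] [Module 𝒜.A P] (f : P →ₗ[𝒜.A] T.M) {x : P}
    (hx : x ∈ 𝒜.jideal • (⊤ : Submodule 𝒜.A P)) : f x = 0 :=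
  Submodule.smul_induction_on hx
    (fun a ha y _ => by rw [map_smul, smul_eq_zero_of_mem_jideal hT ha])
    fun x y hx hy => by rw [map_add, hx, hy, add_zero]

namespace MinRes

variable (R : MinRes M) {n : ℕ}

theorem comp_d_eq_zero (hT : ∀ j ≠ 0, T.grading j = ⊥) (f : HomSp T R n) : f ∘ₗ (R.d n).lin = 0 :=
  LinearMap.ext fun x => GMod.map_eq_zero_of_mem_jideal_smul_top hT f (R.minimal n ⟨x, rfl⟩)

theorem mem_cocyc (hT : ∀ j ≠ 0, T.grading j = ⊥) (f : HomSp T R n) : f ∈ cocyc T R n :=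
  R.comp_d_eq_zero hT f

theorem cobound_eq_bot (hT : ∀ j ≠ 0, T.grading j = ⊥) : cobound T R n = ⊥ := by
  cases n with
  | zero => rfl
  | succ n => exact LinearMap.range_eq_bot.2 (LinearMap.ext fun f => R.comp_d_eq_zero hT f)

/-- With coefficients in a module concentrated in degree `0`, all differentials of the cochain
complex of a minimal resolution vanish, so its cochains are the Ext classes. -/
def homEquivExt (hT : ∀ j ≠ 0, T.grading j = ⊥) (n : ℕ) : HomSp T R n ≃ₗ[F] ExtQ T R n :=
  (LinearEquiv.ofTop _ (eq_top_iff.2 fun f _ => R.mem_cocyc hT f)).symm.trans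
    ((extRel T R n).quotEquivOfEqBot (by
      rw [extRel, R.cobound_eq_bot hT, Submodule.comap_bot, Submodule.ker_subtype])).symm

end MinRes

end TrivialCoefficients

namespace MinRes

variable {T M : 𝒜.GMod} {δ : ℕ → ℕ} (RT : MinRes T) (RM : MinRes M)
  (hRT : ∀ n, (RT.P n).GenInDeg (δ n)) (hRM : ∀ n, (RM.P n).GenInDeg (δ n)) {a b s : ℕ}

/-- The cochain of a chain map of homological degree `a`. -/
def cochain (a : ℕ) :
    (RM.toPureComplex hRM →ₗ[𝒜.A] RT.toPureComplex hRT) →ₗ[F] HomSp T RM a where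
  toFun g := RT.augmentation hRT ∘ₗ g ∘ₗ RM.incl hRM a
  map_add' f g := LinearMap.ext fun x =>
    map_add (RT.augmentation hRT) (f (RM.incl hRM a x)) (g (RM.incl hRM a x))
  map_smul' r g := LinearMap.ext fun x =>
    (RT.augmentation hRT).map_smul_of_tower r (g (RM.incl hRM a x))

theorem incl_component_chainMap {g : RM.toPureComplex hRM →ₗ[𝒜.A] RT.toPureComplex hRT}
    (hg : PureComplex.IsChainMap b (RM.toPureComplex hRM) (RT.toPureComplex hRT) g)
    (x : (RM.P (a + b)).M) :
    RT.incl hRT a (RT.component hRT a (g (RM.incl hRM (a + b) x))) = g (RM.incl hRM (a + b) x) := by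
  suffices h : RT.incl hRT a ∘ₗ RT.component hRT a ∘ₗ g ∘ₗ RM.incl hRM (a + b) =
      g ∘ₗ RM.incl hRM (a + b) from LinearMap.congr_fun h x
  exact LinearMap.ext_on (hRM _) fun x hx =>
    RT.incl_component_of_mem_gen hRT (hg.map_mem_gen a _ (RM.incl_mem_gen hRM hx))

/-- The components of a chain map between total complexes lift its cochain. -/
def chainLift {g : RM.toPureComplex hRM →ₗ[𝒜.A] RT.toPureComplex hRT}
    (hg : PureComplex.IsChainMap b (RM.toPureComplex hRM) (RT.toPureComplex hRT) g) :
    ChainLift T RT RM b (cochain RT RM hRT hRM b g) where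
  ℓ m k _ := RT.component hRT k ∘ₗ g ∘ₗ RM.incl hRM m
  comm_aug := rfl
  comm k := LinearMap.ext fun x => by
    simp only [LinearMap.comp_apply]
    rw [← component_diff, ← hg.map_diff, diff_incl_succ]

theorem bijective_cochain (hT : ∀ j ≠ 0, T.grading j = ⊥) (hs : IsJumpPeriod δ s) :
    Function.Bijective (cochain RT RM hRT hRM s ∘ₗ
      (PureComplex.chainMaps (RM.toPureComplex hRM) (RT.toPureComplex hRT) s).subtype) := by
  have hX := RT.toPureComplex_exactFrom_zero hRT hT
  let e := RT.headEquiv hRT hs.map_zero hT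
  refine ⟨fun f g hfg => Subtype.ext ?_, fun h => ?_⟩
  · refine f.2.eq_of_head_eq hs.strictMono hX g.2 fun v hv => ?_
    have hf := f.2.map_mem_gen 0 v (by rwa [zero_add])
    have hg := g.2.map_mem_gen 0 v (by rwa [zero_add])
    obtain ⟨x, -, rfl⟩ := RM.exists_incl_eq_of_mem_gen hRM hv
    have he : e ⟨_, hf⟩ = e ⟨_, hg⟩ := LinearMap.congr_fun hfg x
    exact congrArg Subtype.val (e.injective he)
  · obtain ⟨f, hf, hfu⟩ := PureComplex.exists_isChainMap hs hX
      (((RT.toPureComplex hRT).gen 0).subtype ∘ₗ e.symm.toLinearMap ∘ₗ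
        (h ∘ₗ RM.component hRM s).restrictScalars (ZeroRing 𝒜) ∘ₗ
        ((RM.toPureComplex hRM).gen s).subtype) fun v => Subtype.coe_prop _
    refine ⟨⟨f, hf⟩, LinearMap.ext_on (hRM s) fun x hx => ?_⟩
    calc RT.augmentation hRT (f (RM.incl hRM s x))
        = e (e.symm (h (RM.component hRM s (RM.incl hRM s x)))) :=
          congrArg _ (hfu ⟨_, RM.incl_mem_gen hRM hx⟩)
      _ = h x := by rw [e.apply_symm_apply, component_incl]

variable (hT : ∀ j ≠ 0, T.grading j = ⊥)

/-- The Ext class of a chain map of homological degree `a`. -/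
def chainClass (a : ℕ) :
    (RM.toPureComplex hRM →ₗ[𝒜.A] RT.toPureComplex hRT) →ₗ[F] ExtQ T RM a :=
  (RM.homEquivExt hT a).toLinearMap ∘ₗ cochain RT RM hRT hRM a

/-- Chain maps of homological degree `s` as Ext classes. There are no homotopies to divide out,
since chain maps into a minimal complex generated in increasing degrees are determined by their
classes. -/
def chainMapsEquivExt (hs : IsJumpPeriod δ s) :
    PureComplex.chainMaps (RM.toPureComplex hRM) (RT.toPureComplex hRT) s ≃ₗ[F] ExtQ T RM s :=
  (LinearEquiv.ofBijective _ (bijective_cochain RT RM hRT hRM hT hs)).trans (RM.homEquivExt hT s)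

theorem chainClass_comp {μ : ∀ i j : ℕ, ExtQ T RT i →ₗ[F] ExtQ T RM j →ₗ[F] ExtQ T RM (i + j)}
    (hμ : IsYonedaMul T RT RM μ) (f : RT.toPureComplex hRT →ₗ[𝒜.A] RT.toPureComplex hRT)
    {g : RM.toPureComplex hRM →ₗ[𝒜.A] RT.toPureComplex hRT}
    (hg : PureComplex.IsChainMap b (RM.toPureComplex hRM) (RT.toPureComplex hRT) g) {n : ℕ}
    (hn : a + b = n) :
    chainClass RT RM hRT hRM hT n (f ∘ₗ g) = extCast T RM hn
      (μ a b (chainClass RT RT hRT hRT hT a f) (chainClass RT RM hRT hRM hT b g)) := by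
  subst hn
  let f' := cochain RT RT hRT hRT a f
  let L := chainLift RT RM hRT hRM hg
  have hcochain : cochain RT RM hRT hRM (a + b) (f ∘ₗ g) = f' ∘ₗ L.ℓ (a + b) a rfl :=
    LinearMap.ext fun x => congrArg (fun y => RT.augmentation hRT (f y))
      (incl_component_chainMap RT RM hRT hRM hg x).symm
  calc chainClass RT RM hRT hRM hT (a + b) (f ∘ₗ g)
      = extCls T (RM.mem_cocyc hT (f' ∘ₗ L.ℓ (a + b) a rfl)) :=
        congrArg (RM.homEquivExt hT (a + b)) hcochain
    _ = _ := (hμ a b f' (RT.mem_cocyc hT f') _ (RM.mem_cocyc hT _) L _).symm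

end MinRes

namespace PureComplex

variable {δ : ℕ → ℕ} (X Y : PureComplex 𝒜 δ) {c : ℕ} (hc : 0 < c)

/-- The degree `n` part of `chainEndAlg X hc`. -/
def chainEndAlgGradingEquiv (n : ℕ) :
    (chainEndAlg X hc).grading n ≃ₗ[F] chainMaps X X (c * n) :=
  Submodule.comapSubtypeEquivOfLe (q := chainMapSum c X X) fun _ => IsChainMap.mem_chainMapSum

theorem mem_chainHomMod_natCast {n : ℕ} {f : chainMapSum c X Y} :
    f ∈ (chainHomMod X Y hc 0).grading n ↔ IsChainMap (c * n) Y X f.1 := by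
  simpa only [add_zero] using mem_chainHomMod_natCast_add hc (s := 0) (n := n) (f := f)

/-- The degree `n` part of `chainHomMod X Y hc 0`. -/
def chainHomModGradingEquiv (n : ℕ) :
    (chainHomMod X Y hc 0).grading n ≃ₗ[F] chainMaps Y X (c * n) where
  toFun g := ⟨(g.1 : chainMapSum c X Y).1, (mem_chainHomMod_natCast X Y hc).1 g.2⟩
  invFun g := ⟨(⟨g.1, g.2.mem_chainMapSum⟩ : chainMapSum c X Y),
    (mem_chainHomMod_natCast X Y hc).2 g.2⟩
  map_add' _ _ := rfl
  map_smul' _ _ := rfl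

theorem chainHomMod_grading_eq_bot {s j : ℤ} (hj : j < s) :
    (chainHomMod X Y hc s).grading j = ⊥ :=
  intShift_of_forall_ne (p := fun n => (chainMaps Y X (c * n)).comap (chainMapSum c X Y).subtype)
    fun n => by omega

end PureComplex

theorem jump_add_left (e p n : ℕ) : jump (p + e) p n = n + n / p * e := by
  rw [jump, ← Nat.div_eq_sub_mod_div, mul_add, add_right_comm, Nat.div_add_mod']

theorem isJumpPeriod_jump {p d : ℕ} (hp : 0 < p) (hpd : p ≤ d) (k : ℕ) :
    IsJumpPeriod (jump d p) (p * k) := by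
  obtain ⟨e, rfl⟩ := Nat.exists_eq_add_of_le hpd
  refine ⟨fun m n h => ?_, fun n => ?_⟩
  · simp only [jump_add_left]
    exact add_lt_add_of_lt_of_le h (Nat.mul_le_mul_right e (Nat.div_le_div_right h.le))
  · simp only [jump_add_left, Nat.add_mul_div_left _ _ hp, Nat.mul_div_cancel_left _ hp]
    ring

theorem MinRes.genInDeg_jump {M : 𝒜.GMod} {p d : ℕ} (R : MinRes M) (hM : 𝒜.IsPKMod p d 0 M)
    (n : ℕ) : (R.P n).GenInDeg (jump d p n) := by
  obtain ⟨R', hR'⟩ := hM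
  exact R.genInDeg_of_genInDeg R' (by simpa only [add_zero] using hR' n)

end GradedAlg

open GradedAlg PureComplex in
theorem ext_subalgebra_and_submodule_isKoszul_general
    {F : Type} [Field F] (𝒜 : GradedAlg F) [IsSemisimpleRing ↥(𝒜.grading 0)]
    {δ : ℕ → ℕ} {c : ℕ} (hc : 0 < c) (hδ : IsJumpPeriod δ c)
    (T : 𝒜.GMod) (hT : IsTrivialGMod T) (M : 𝒜.GMod)
    (RT : MinRes T) (hRT : ∀ n, (RT.P n).GenInDeg (δ n))
    (RM : MinRes M) (hRM : ∀ n, (RM.P n).GenInDeg (δ n))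
    (μA : ∀ i j : ℕ, ExtQ T RT i →ₗ[F] ExtQ T RT j →ₗ[F] ExtQ T RT (i + j))
    (hμA : IsYonedaMul T RT RT μA)
    (μM : ∀ i j : ℕ, ExtQ T RT i →ₗ[F] ExtQ T RM j →ₗ[F] ExtQ T RM (i + j))
    (hμM : IsYonedaMul T RT RM μM) :
    ∃ (B : GradedAlg F) (φ : ∀ n : ℕ, ↥(B.grading n) ≃ₗ[F] ExtQ T RT (c * n))
      (N : B.GMod) (ψ : ∀ n : ℕ, ↥(N.grading (n : ℤ)) ≃ₗ[F] ExtQ T RM (c * n)),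
      (∀ (m n : ℕ) (x : ↥(B.grading m)) (y : ↥(B.grading n)),
        φ (m + n) ⟨(x : B.A) * (y : B.A), SetLike.mul_mem_graded x.2 y.2⟩ =
          extCast T RT (by ring) (μA (c * m) (c * n) (φ m x) (φ n y))) ∧
      (∀ j : ℤ, j < 0 → N.grading j = ⊥) ∧
      (∀ (m n : ℕ) (x : ↥(B.grading m)) (y : ↥(N.grading (n : ℤ))),
        ψ (m + n) ⟨(x : B.A) • (y : N.M), by
            have h := N.smul_mem x.2 y.2
            rwa [show ((m : ℤ) + (n : ℤ)) = ((m + n : ℕ) : ℤ) by push_cast; ring] at h⟩ =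
          extCast T RM (by ring) (μM (c * m) (c * n) (φ m x) (ψ n y))) ∧
      B.IsKoszulMod N ∧
      (∃ T' : B.GMod, IsTrivialGMod T' ∧ B.IsKoszulMod T') := by
  have : IsSemisimpleRing (ZeroRing 𝒜) := ‹_›
  let X := RT.toPureComplex hRT
  let Y := RM.toPureComplex hRM
  have hX : X.ExactFrom 0 := RT.toPureComplex_exactFrom_zero hRT hT.1
  obtain ⟨E⟩ := RT.nonempty_gen_zero_equiv hRT hδ.map_zero hT
  refine ⟨chainEndAlg X hc,
    fun n => (chainEndAlgGradingEquiv X hc n).trans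
      (MinRes.chainMapsEquivExt RT RT hRT hRT hT.1 (hδ.mul n)),
    chainHomMod X Y hc 0,
    fun n => (chainHomModGradingEquiv X Y hc n).trans
      (MinRes.chainMapsEquivExt RT RM hRT hRM hT.1 (hδ.mul n)),
    fun m n x y => ?_, fun j => chainHomMod_grading_eq_bot X Y hc, fun m n x y => ?_,
    isKoszulMod_chainHomMod hc hδ hX E (RM.toPureComplex_exactFrom_one hRM),
    chainHomMod X (unit 𝒜 δ) hc 0, isTrivialGMod_chainHomMod_unit hc hδ hX E,
    isKoszulMod_chainHomMod hc hδ hX E unit_exactFrom_one⟩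
  · exact MinRes.chainClass_comp RT RT hRT hRT hT.1 hμA
      (chainEndAlgGradingEquiv X hc m x).1 (chainEndAlgGradingEquiv X hc n y).2 _
  · exact MinRes.chainClass_comp RT RM hRT hRM hT.1 hμM
      (chainEndAlgGradingEquiv X hc m x).1 (chainHomModGradingEquiv X Y hc n y).2 _

open GradedAlg in
/-- **Remark to Theorem 2.8.** Let `A` be piecewise-Koszul with period `p` and jump
degree `d`, and let `M` be a piecewise-Koszul module generated in degree `0`.  Then for
every `k ≥ 1`: (1) `𝓔_k(M) = ⊕_{n≥0} Ext^{pkn}_A(M,A_0)` is a Koszul module over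
`𝓔_k(A)`; and (2) `𝓔_k(A) = ⊕_{n≥0} Ext^{pkn}_A(A_0,A_0)` is a Koszul algebra.
These are witnessed by a graded algebra `B` and a graded `B`-module `N` whose
components correspond to the Ext groups and whose multiplication/action corresponds to
the Yoneda product/action. -/
theorem ext_subalgebra_and_submodule_isKoszul
    {F : Type} [Field F] (𝒜 : GradedAlg F) (hA : 𝒜.Standing)
    (p d : ℕ) (hp : 2 ≤ p) (hpd : p ≤ d)
    (T : 𝒜.GMod) (hT : IsTrivialGMod T) (hpk : 𝒜.IsPKAlg p d T)
    (M : 𝒜.GMod) (hfg : Module.Finite 𝒜.A M.M)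
    (hM0 : M.GenInDeg (0 : ℤ)) (hMpk : 𝒜.IsPKMod p d 0 M)
    (RT : MinRes T) (RM : MinRes M)
    (μA : ∀ i j : ℕ, ExtQ T RT i →ₗ[F] ExtQ T RT j →ₗ[F] ExtQ T RT (i + j))
    (hμA : IsYonedaMul T RT RT μA)
    (μM : ∀ i j : ℕ, ExtQ T RT i →ₗ[F] ExtQ T RM j →ₗ[F] ExtQ T RM (i + j))
    (hμM : IsYonedaMul T RT RM μM)
    (k : ℕ) (hk : 1 ≤ k) :
    ∃ (B : GradedAlg F) (φ : ∀ n : ℕ, ↥(B.grading n) ≃ₗ[F] ExtQ T RT (p * k * n))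
      (N : B.GMod) (ψ : ∀ n : ℕ, ↥(N.grading (n : ℤ)) ≃ₗ[F] ExtQ T RM (p * k * n)),
      (∀ (m n : ℕ) (x : ↥(B.grading m)) (y : ↥(B.grading n)),
        φ (m + n) ⟨(x : B.A) * (y : B.A), SetLike.mul_mem_graded x.2 y.2⟩ =
          extCast T RT (by ring) (μA (p * k * m) (p * k * n) (φ m x) (φ n y))) ∧
      (∀ j : ℤ, j < 0 → N.grading j = ⊥) ∧
      (∀ (m n : ℕ) (x : ↥(B.grading m)) (y : ↥(N.grading (n : ℤ))),
        ψ (m + n) ⟨(x : B.A) • (y : N.M), by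
            have h := N.smul_mem x.2 y.2
            rwa [show ((m : ℤ) + (n : ℤ)) = ((m + n : ℕ) : ℤ) by push_cast; ring] at h⟩ =
          extCast T RM (by ring) (μM (p * k * m) (p * k * n) (φ m x) (ψ n y))) ∧
      B.IsKoszulMod N ∧
      (∃ T' : B.GMod, IsTrivialGMod T' ∧ B.IsKoszulMod T') := by
  have := hA.semisimple
  exact ext_subalgebra_and_submodule_isKoszul_general 𝒜 (Nat.mul_pos (by omega) hk)
    (isJumpPeriod_jump (by omega) hpd k) T hT M RT (RT.genInDeg_jump hpk) RM
    (RM.genInDeg_jump hMpk) μA hμA μM hμM
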